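/- arXiv:1805.11448 — 6 statements merged into one kernel-verified Lean document; each statement's English description precedes it below -/
import Mathlib

section
/- Let A be a skew PBW extension of a ring R with generators x_1,…,x_n. Then for each 1 ≤ i ≤ n there exist an injective ring endomorphism σ_i : R → R and a σ_i-derivation δ_i : R → R such that x_i r = σ_i(r) x_i + δ_i(r) for every r ∈ R. -/
open Finsupp

noncomputable section

variable {R A : Type*}

/-- The ordered monomial `x₁^{α₁} ⋯ xₙ^{αₙ}` in a (possibly noncommutative) ring. -/
def spbwMon [Ring A] {n : ℕ} (x : Fin n → A) (α : Fin n →₀ ℕ) : A :=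
  (List.ofFn fun i => x i ^ α i).prod

/-- `A` is a skew Poincaré–Birkhoff–Witt extension of `R` (embedded in `A` via `ι`)
with generators `x 0, …, x (n-1)`:
(i) `R ⊆ A` (via the embedding `ι`);
(ii) `A` is a free left `R`-module with basis the monomials `x^α`, i.e. every element of `A`
has a unique representation as a finite `R`-linear combination of the monomials;
(iii) for each `i` and each nonzero `r ∈ R` there is a nonzero `c ∈ R` with
`x i * r - c * x i ∈ R`;
(iv) for all `i, j` there is a nonzero `c ∈ R` with
`x j * x i - c * (x i * x j) ∈ R + R x 0 + ⋯ + R x (n-1)`. -/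
structure IsSkewPBWExtension [Ring R] [Ring A] (ι : R →+* A) {n : ℕ} (x : Fin n → A) :
    Prop where
  not_mem : ∀ i, x i ∉ Set.range ι
  repr_uniq : ∀ a : A, ∃! c : (Fin n →₀ ℕ) →₀ R, a = c.sum fun α r => ι r * spbwMon x α
  var_coeff : ∀ i, ∀ r : R, r ≠ 0 →
    ∃ cr : R, cr ≠ 0 ∧ x i * ι r - ι cr * x i ∈ Set.range ι
  var_var : ∀ i j, ∃ cij : R, cij ≠ 0 ∧ ∃ r₀ : R, ∃ rv : Fin n → R,
    x j * x i - ι cij * (x i * x j) = ι r₀ + ∑ k, ι (rv k) * x k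

theorem spbwMon_zero_aux [Ring A] {n : ℕ} (x : Fin n → A) : spbwMon x 0 = 1 := by
  simp [spbwMon]

theorem list_ofFn_prod_aux {M : Type*} [Monoid M] : ∀ {n : ℕ} (f : Fin n → M) (i : Fin n),
    (∀ j, j ≠ i → f j = 1) → (List.ofFn f).prod = f i
  | 0, _, i, _ => i.elim0
  | n + 1, f, i, hf => by
    rw [List.ofFn_succ, List.prod_cons]
    induction i using Fin.cases with
    | zero =>
      have : (fun j : Fin n => f j.succ) = fun _ => 1 := by
        funext j
        exact hf _ (Fin.succ_ne_zero j)
      rw [this]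
      simp
    | succ i =>
      rw [hf 0 (Fin.succ_ne_zero i).symm, one_mul]
      exact list_ofFn_prod_aux (fun j : Fin n => f j.succ) i
        (fun j hj => hf _ (fun e => hj (Fin.succ_injective _ e)))

theorem spbwMon_single_aux [Ring A] {n : ℕ} (x : Fin n → A) (i : Fin n) :
    spbwMon x (Finsupp.single i 1) = x i := by
  unfold spbwMon
  rw [list_ofFn_prod_aux _ i]
  · simp
  · intro j hj
    rw [Finsupp.single_eq_of_ne hj, pow_zero]

theorem spbw_uniq_aux [Ring R] [Ring A] (ι : R →+* A) {n : ℕ}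
    (x : Fin n → A) (h : IsSkewPBWExtension ι x) (i : Fin n) (a b a' b' : R)
    (e : ι a * x i + ι b = ι a' * x i + ι b') : a = a' ∧ b = b' := by
  have key : ∀ a b : R, ι a * x i + ι b =
      (Finsupp.single (Finsupp.single i 1) a + Finsupp.single 0 b :
        (Fin n →₀ ℕ) →₀ R).sum fun α r => ι r * spbwMon x α := by
    intro a b
    rw [Finsupp.sum_add_index' (by simp) (by intros; simp [add_mul]),
      Finsupp.sum_single_index (by simp), Finsupp.sum_single_index (by simp),
      spbwMon_single_aux, spbwMon_zero_aux, mul_one]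
  have u := (h.repr_uniq (ι a * x i + ι b)).unique (key a b) (e.trans (key a' b'))
  have hne : (Finsupp.single i 1 : Fin n →₀ ℕ) ≠ 0 := by simp
  have u1 := DFunLike.congr_fun u (Finsupp.single i 1)
  have u2 := DFunLike.congr_fun u 0
  rw [Finsupp.add_apply, Finsupp.add_apply, Finsupp.single_eq_same, Finsupp.single_eq_same,
    Finsupp.single_eq_of_ne hne, Finsupp.single_eq_of_ne hne, add_zero, add_zero] at u1
  rw [Finsupp.add_apply, Finsupp.add_apply, Finsupp.single_eq_same, Finsupp.single_eq_same,
    Finsupp.single_eq_of_ne hne.symm, Finsupp.single_eq_of_ne hne.symm, zero_add, zero_add] at u2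
  exact ⟨u1, u2⟩

/-- If `A` is a skew PBW extension of `R` with generators `x i`, then for
each `i` there exist an injective ring endomorphism `σ` of `R` and a `σ`-derivation
`δ : R → R` such that `x i * r = σ(r) * x i + δ(r)` for every `r ∈ R`. -/
theorem skewPBW_exists_sigma_delta [Ring R] [Ring A] (ι : R →+* A) {n : ℕ}
    (x : Fin n → A) (h : IsSkewPBWExtension ι x) :
    ∀ i : Fin n, ∃ σ : R →+* R, Function.Injective σ ∧
      ∃ δ : R → R, (∀ r s : R, δ (r + s) = δ r + δ s) ∧
        (∀ r s : R, δ (r * s) = σ r * δ s + δ r * s) ∧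
        ∀ r : R, x i * ι r = ι (σ r) * x i + ι (δ r) := by
  intro i
  have ex : ∀ r : R, ∃ c d : R, (r ≠ 0 → c ≠ 0) ∧ x i * ι r = ι c * x i + ι d := by
    intro r
    by_cases hr : r = 0
    · exact ⟨0, 0, fun h0 => absurd hr h0, by simp [hr]⟩
    · obtain ⟨c, hc, d, hd⟩ := h.var_coeff i r hr
      exact ⟨c, d, fun _ => hc, by rw [hd]; abel⟩
  choose σ δ hσ hx using ex
  have add := fun r s => spbw_uniq_aux ι x h i (σ (r + s)) (δ (r + s)) (σ r + σ s) (δ r + δ s)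
    (by rw [← hx, map_add, mul_add, hx, hx, map_add, map_add, add_mul]; abel)
  have mul := fun r s => spbw_uniq_aux ι x h i (σ (r * s)) (δ (r * s)) (σ r * σ s)
    (σ r * δ s + δ r * s)
    (by
      rw [← hx, map_mul, ← mul_assoc, hx, add_mul, mul_assoc, hx]
      simp only [map_add, map_mul, mul_add, mul_assoc, add_assoc])
  have one := spbw_uniq_aux ι x h i (σ 1) (δ 1) 1 0 (by rw [← hx]; simp)
  have zero := spbw_uniq_aux ι x h i (σ 0) (δ 0) 0 0 (by rw [← hx]; simp)
  let S : R →+* R :=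
    { toFun := σ
      map_one' := one.1
      map_mul' := fun r s => (mul r s).1
      map_zero' := zero.1
      map_add' := fun r s => (add r s).1 }
  refine ⟨S, ?_, δ, fun r s => (add r s).2, fun r s => (mul r s).2, hx⟩
  rw [injective_iff_map_eq_zero]
  intro r hr
  by_contra h0
  exact hσ r h0 hr
end
end

section
/- Let R be a semiprime commutative ring with a derivation δ, and assume that the ring of constants of δ is a field F. Let P be an element of S = R[x; id_R, δ] of positive degree n such that n is invertible in F and the leading coefficient of P is invertible in R. Then C_S(P) is a free F[P]-module of rank at most n. -/
open Finsupp

noncomputable section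

variable {R S : Type*}

/-- `S` is the Ore extension `R[x; σ, δ]` of `R` (embedded in `S` via `ι`):
`δ` is a `σ`-derivation of `R`, `S` is a free left `R`-module with basis `1, x, x², …`,
and `x * r = σ(r) * x + δ(r)` for all `r ∈ R`. -/
structure IsOreExtension [Ring R] [Ring S] (ι : R →+* S) (σ : R →+* R) (δ : R → R)
    (x : S) : Prop where
  deriv_add : ∀ a b : R, δ (a + b) = δ a + δ b
  deriv_mul : ∀ a b : R, δ (a * b) = σ a * δ b + δ a * b
  repr_uniq : ∀ s : S, ∃! c : ℕ →₀ R, s = c.sum fun i r => ι r * x ^ i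
  comm_rule : ∀ r : R, x * ι r = ι (σ r) * x + ι (δ r)

/-- The (unique) coefficient family of `s` with respect to the basis `1, x, x², …`. -/
def oreCoeff [Ring R] [Ring S] {ι : R →+* S} {σ : R →+* R} {δ : R → R} {x : S}
    (h : IsOreExtension ι σ δ x) (s : S) : ℕ →₀ R :=
  (h.repr_uniq s).exists.choose

/-- The degree (in `x`) of an element of the Ore extension. -/
def oreDeg [Ring R] [Ring S] {ι : R →+* S} {σ : R →+* R} {δ : R → R} {x : S}
    (h : IsOreExtension ι σ δ x) (s : S) : ℕ :=
  (oreCoeff h s).support.sup id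

/-- The leading coefficient (in `x`) of an element of the Ore extension. -/
def oreLeadCoeff [Ring R] [Ring S] {ι : R →+* S} {σ : R →+* R} {δ : R → R} {x : S}
    (h : IsOreExtension ι σ δ x) (s : S) : R :=
  oreCoeff h s (oreDeg h s)

/-- The centralizer of `a`: all elements commuting with `a`. -/
def centralizerOf [Ring S] (a : S) : Set S := {b | b * a = a * b}

/-- The set of "polynomials in `P` with coefficients in `F`", i.e. all finite sums
`Σ_j ι(b_j) * P^j` with every `b_j ∈ F`. -/
def polysIn [Ring R] [Ring S] (ι : R →+* S) (F : Set R) (P : S) : Set S :=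
  {s | ∃ d : ℕ →₀ R, (∀ j, d j ∈ F) ∧ s = d.sum fun j b => ι b * P ^ j}

/-- The subset `M` of `S` is a free module of rank at most `nbound` over the coefficient
subring `coeffs ⊆ S` (acting by left multiplication). -/
def IsFreeModuleOfRankAtMost [Ring S] (coeffs : Set S) (M : Set S) (nbound : ℕ) : Prop :=
  ∃ m ≤ nbound, ∃ u : Fin m → S, (∀ i, u i ∈ M) ∧
    ∀ e ∈ M, ∃! c : Fin m → S, (∀ i, c i ∈ coeffs) ∧ e = ∑ i, c i * u i

/-- The subset `M` of `S` is a free module of finite rank over the coefficient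
subring `coeffs ⊆ S` (acting by left multiplication). -/
def IsFreeModuleOfFiniteRank [Ring S] (coeffs : Set S) (M : Set S) : Prop :=
  ∃ m : ℕ, ∃ u : Fin m → S, (∀ i, u i ∈ M) ∧
    ∀ e ∈ M, ∃! c : Fin m → S, (∀ i, c i ∈ coeffs) ∧ e = ∑ i, c i * u i

/-- A subset `F` of a ring is a field (with the induced operations): it is nontrivial and
every nonzero element of `F` has a multiplicative inverse lying in `F`. -/
def IsFieldSubset [Ring R] (F : Set R) : Prop :=
  (0 : R) ≠ 1 ∧ ∀ a ∈ F, a ≠ 0 → ∃ b ∈ F, a * b = 1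

section OreHelpers

/-- Elements of degree `< d`. -/
def oreV [CommRing R] [Ring S] (ι : R →+* S) (x : S) (d : ℕ) : AddSubgroup S :=
  AddSubgroup.closure {s | ∃ r i, i < d ∧ s = ι r * x ^ i}

/-- `s` has leading term `ι b * x ^ d` (where `b` may vanish). -/
def oreLt [CommRing R] [Ring S] (ι : R →+* S) (x : S) (s : S) (d : ℕ) (b : R) : Prop :=
  s - ι b * x ^ d ∈ oreV ι x d

variable [CommRing R] [Ring S] {ι : R →+* S} {x : S} {D : Derivation ℤ R R}

lemma oreV_gen (r : R) {i d : ℕ} (hi : i < d) : ι r * x ^ i ∈ oreV ι x d :=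
  AddSubgroup.subset_closure ⟨r, i, hi, rfl⟩

lemma oreV_mono {d e : ℕ} (hde : d ≤ e) : oreV ι x d ≤ oreV ι x e := by
  apply AddSubgroup.closure_mono
  rintro s ⟨r, i, hi, rfl⟩
  exact ⟨r, i, by omega, rfl⟩

lemma oreV_zero {s : S} (hs : s ∈ oreV ι x 0) : s = 0 := by
  have : {s : S | ∃ (r : R) (i : ℕ), i < 0 ∧ s = ι r * x ^ i} = ∅ := by
    ext s; simp
  unfold oreV at hs
  rw [this] at hs
  simpa using hs

lemma oreV_smul (b : R) {d : ℕ} {s : S} (hs : s ∈ oreV ι x d) : ι b * s ∈ oreV ι x d := by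
  induction hs using AddSubgroup.closure_induction with
  | mem s hs =>
    obtain ⟨r, i, hi, rfl⟩ := hs
    rw [← mul_assoc, ← map_mul]
    exact oreV_gen _ hi
  | zero => simp
  | add a b _ _ ha hb => rw [mul_add]; exact add_mem ha hb
  | neg a _ ha => rw [mul_neg]; exact neg_mem ha

lemma oreV_mul_pow (j : ℕ) {d : ℕ} {s : S} (hs : s ∈ oreV ι x d) :
    s * x ^ j ∈ oreV ι x (d + j) := by
  induction hs using AddSubgroup.closure_induction with
  | mem s hs =>
    obtain ⟨r, i, hi, rfl⟩ := hs
    rw [mul_assoc, ← pow_add]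
    exact oreV_gen _ (by omega)
  | zero => simp
  | add a b _ _ ha hb => rw [add_mul]; exact add_mem ha hb
  | neg a _ ha => rw [neg_mul]; exact neg_mem ha

lemma oreV_x_mul (hx : ∀ r, x * ι r = ι r * x + ι (D r)) {d : ℕ} {s : S}
    (hs : s ∈ oreV ι x d) : x * s ∈ oreV ι x (d + 1) := by
  induction hs using AddSubgroup.closure_induction with
  | mem s hs =>
    obtain ⟨r, i, hi, rfl⟩ := hs
    rw [← mul_assoc, hx, add_mul, mul_assoc, ← pow_succ']
    exact add_mem (oreV_gen _ (by omega)) (oreV_gen _ (by omega))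
  | zero => simp
  | add a b _ _ ha hb => rw [mul_add]; exact add_mem ha hb
  | neg a _ ha => rw [mul_neg]; exact neg_mem ha

lemma ore_pow_comm (hx : ∀ r, x * ι r = ι r * x + ι (D r)) (r : R) (d : ℕ) :
    x ^ (d + 1) * ι r - ι r * x ^ (d + 1) - ι ((d + 1 : ℕ) * D r) * x ^ d ∈ oreV ι x d := by
  induction d with
  | zero => simp [hx]
  | succ d ih =>
    have h1 := oreV_x_mul hx ih
    have h2 : ι (D ((d + 1 : ℕ) * D r)) * x ^ d ∈ oreV ι x (d + 1) := oreV_gen _ (by omega)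
    have h3 := add_mem h1 h2
    convert h3 using 1
    rw [mul_sub, mul_sub, ← mul_assoc x (ι r), hx, ← mul_assoc x (ι _), hx,
      ← mul_assoc x (x ^ (d + 1)), ← pow_succ']
    have : ((d + 1 + 1 : ℕ) : R) * D r = D r + (d + 1 : ℕ) * D r := by push_cast; ring
    rw [this, map_add]
    simp only [add_mul, mul_assoc, ← pow_succ']
    abel

lemma ore_prod (hx : ∀ r, x * ι r = ι r * x + ι (D r)) (b r : R) {d j M : ℕ}
    (hM : d + j = M + 1) :
    ι b * x ^ d * (ι r * x ^ j) - ι (b * r) * x ^ (M + 1) - ι (d * b * D r) * x ^ M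
      ∈ oreV ι x M := by
  rcases d with _ | d
  · obtain rfl : j = M + 1 := by omega
    simp [mul_assoc]
  · obtain rfl : M = d + j := by omega
    have h1 := oreV_mul_pow j (oreV_smul b (ore_pow_comm hx r d))
    convert h1 using 1
    have e1 : ι (((d + 1 : ℕ) : R) * b * D r) = ι b * ι ((d + 1 : ℕ) * D r) := by
      rw [← map_mul]; congr 1; ring
    rw [e1, map_mul]
    have e2 : x ^ (d + j + 1) = x ^ (d + 1) * x ^ j := by rw [← pow_add]; congr 1; omega
    rw [e2, pow_add x d j]
    simp only [mul_sub, sub_mul, mul_assoc]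

lemma ore_prod1 (hx : ∀ r, x * ι r = ι r * x + ι (D r)) (b r : R) (d j : ℕ) :
    ι b * x ^ d * (ι r * x ^ j) - ι (b * r) * x ^ (d + j) ∈ oreV ι x (d + j) := by
  rcases hM : d + j with _ | M
  · obtain rfl : d = 0 := by omega
    obtain rfl : j = 0 := by omega
    simp
  · have h1 := oreV_mono (Nat.le_succ M) (ore_prod hx b r hM)
    have h2 : ι (d * b * D r) * x ^ M ∈ oreV ι x (M + 1) := oreV_gen _ (by omega)
    simpa using add_mem h1 h2

lemma oreV_mul (hx : ∀ r, x * ι r = ι r * x + ι (D r)) {d e M : ℕ} (hM : d + e ≤ M + 1)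
    {s t : S} (hs : s ∈ oreV ι x d) (ht : t ∈ oreV ι x e) : s * t ∈ oreV ι x M := by
  induction hs using AddSubgroup.closure_induction with
  | mem s hs =>
    obtain ⟨r, i, hi, rfl⟩ := hs
    induction ht using AddSubgroup.closure_induction with
    | mem s hs =>
      obtain ⟨r', j, hj, rfl⟩ := hs
      have h1 : _ ∈ oreV ι x M := oreV_mono (by omega) (ore_prod1 hx r r' i j)
      have h2 : ι (r * r') * x ^ (i + j) ∈ oreV ι x M := oreV_gen _ (by omega)
      simpa using add_mem h1 h2
    | zero => simp
    | add a b _ _ ha hb => rw [mul_add]; exact add_mem ha hb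
    | neg a _ ha => rw [mul_neg]; exact neg_mem ha
  | zero => simp
  | add a b _ _ ha hb => rw [add_mul]; exact add_mem ha hb
  | neg a _ ha => rw [neg_mul]; exact neg_mem ha

lemma oreV_comm (hx : ∀ r, x * ι r = ι r * x + ι (D r)) {d e M : ℕ} (hM : d + e ≤ M + 2)
    {s t : S} (hs : s ∈ oreV ι x d) (ht : t ∈ oreV ι x e) : s * t - t * s ∈ oreV ι x M := by
  induction hs using AddSubgroup.closure_induction with
  | mem s hs =>
    obtain ⟨r, i, hi, rfl⟩ := hs
    induction ht using AddSubgroup.closure_induction with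
    | mem s hs =>
      obtain ⟨r', j, hj, rfl⟩ := hs
      have h1 : _ ∈ oreV ι x M := oreV_mono (by omega) (ore_prod1 hx r r' i j)
      have h2 : _ ∈ oreV ι x M := oreV_mono (by omega) (ore_prod1 hx r' r j i)
      have h3 := sub_mem h1 h2
      rw [mul_comm r' r, add_comm j i] at h3
      simpa using h3
    | zero => simp
    | add a b _ _ ha hb =>
      convert add_mem ha hb using 1
      rw [mul_add, add_mul]; abel
    | neg a _ ha =>
      convert neg_mem ha using 1
      rw [mul_neg, neg_mul]; abel
  | zero => simp
  | add a b _ _ ha hb =>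
    convert add_mem ha hb using 1
    rw [mul_add, add_mul]; abel
  | neg a _ ha =>
    convert neg_mem ha using 1
    rw [mul_neg, neg_mul]; abel

lemma oreLt.mem {s : S} {d : ℕ} {b : R} (hs : oreLt ι x s d b) : s ∈ oreV ι x (d + 1) := by
  have h1 := oreV_mono (Nat.le_succ d) hs
  have h2 : ι b * x ^ d ∈ oreV ι x (d + 1) := oreV_gen _ (by omega)
  simpa using add_mem h1 h2

lemma oreLt.mul (hx : ∀ r, x * ι r = ι r * x + ι (D r)) {s t : S} {d e : ℕ} {b c : R}
    (hs : oreLt ι x s d b) (ht : oreLt ι x t e c) : oreLt ι x (s * t) (d + e) (b * c) := by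
  have h1 : _ ∈ oreV ι x (d + e) := oreV_mul hx (by omega) hs ht.mem
  have h2 : _ ∈ oreV ι x (d + e) :=
    oreV_mul hx (by omega) (oreV_gen (ι := ι) (x := x) b (Nat.lt_succ_self d)) ht
  have h3 := add_mem (add_mem h1 h2) (ore_prod1 hx b c d e)
  unfold oreLt
  convert h3 using 1
  simp only [sub_mul, mul_sub]; abel

lemma oreLt_one : oreLt ι x 1 0 1 := by simp [oreLt]

lemma oreLt_const (b : R) : oreLt ι x (ι b) 0 b := by simp [oreLt]

lemma oreLt.pow (hx : ∀ r, x * ι r = ι r * x + ι (D r)) {s : S} {d : ℕ} {b : R}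
    (hs : oreLt ι x s d b) (k : ℕ) : oreLt ι x (s ^ k) (d * k) (b ^ k) := by
  induction k with
  | zero => simpa using oreLt_one
  | succ k ih => rw [pow_succ, pow_succ, mul_add, mul_one]; exact ih.mul hx hs

/-- existence of leading terms -/
lemma oreV_succ {s : S} {d : ℕ} (hs : s ∈ oreV ι x (d + 1)) : ∃ b, oreLt ι x s d b := by
  induction hs using AddSubgroup.closure_induction with
  | mem s hs =>
    obtain ⟨r, i, hi, rfl⟩ := hs
    rcases Nat.lt_succ_iff_lt_or_eq.1 hi with h | rfl
    · exact ⟨0, by simpa [oreLt] using oreV_gen r h⟩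
    · exact ⟨r, by simp [oreLt]⟩
  | zero => exact ⟨0, by simp [oreLt]⟩
  | add a b _ _ ha hb =>
    obtain ⟨u, hu⟩ := ha
    obtain ⟨v, hv⟩ := hb
    refine ⟨u + v, ?_⟩
    unfold oreLt
    convert add_mem hu hv using 1
    rw [map_add, add_mul]; abel
  | neg a _ ha =>
    obtain ⟨u, hu⟩ := ha
    refine ⟨-u, ?_⟩
    unfold oreLt
    convert neg_mem hu using 1
    rw [map_neg, neg_mul]; abel

lemma oreLt_exists {s : S} (hs : s ≠ 0) {d : ℕ} (hd : s ∈ oreV ι x d) :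
    ∃ e b, b ≠ 0 ∧ oreLt ι x s e b := by
  induction d with
  | zero => exact absurd (oreV_zero hd) hs
  | succ d ih =>
    obtain ⟨b, hb⟩ := oreV_succ hd
    by_cases h0 : b = 0
    · subst h0
      exact ih (by simpa [oreLt] using hb)
    · exact ⟨d, b, h0, hb⟩

lemma oreLt_comm (hx : ∀ r, x * ι r = ι r * x + ι (D r))
    (hind : ∀ b d, ι b * x ^ d ∈ oreV ι x d → b = 0)
    {P Q : S} {n d : ℕ} {a b : R} (hn : 0 < n)
    (hP : oreLt ι x P n a) (hQ : oreLt ι x Q d b) (hPQ : Q * P = P * Q) :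
    n * a * D b = d * b * D a := by
  obtain ⟨m, rfl⟩ : ∃ m, n = m + 1 := ⟨n - 1, by omega⟩
  have h1 : _ ∈ oreV ι x (m + d) := oreV_comm hx (by omega) hP hQ.mem
  have h2 : _ ∈ oreV ι x (m + d) :=
    oreV_comm hx (by omega) (oreV_gen (ι := ι) (x := x) a (Nat.lt_succ_self (m + 1))) hQ
  have h3 := ore_prod hx a b (d := m + 1) (j := d) (M := m + d) (by omega)
  have h4 := ore_prod hx b a (d := d) (j := m + 1) (M := m + d) (by omega)
  rw [mul_comm b a] at h4
  have h5 := sub_mem h3 h4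
  have h6 := neg_mem (add_mem (add_mem h1 h2) h5)
  refine sub_eq_zero.1 (hind _ (m + d) ?_)
  convert h6 using 1
  simp only [map_sub, sub_mul, mul_sub, hPQ]
  abel

lemma oreLt_unit (hsemi : ∀ a : R, IsNilpotent a → a = 0)
    (hF : ∀ a, D a = 0 → a ≠ 0 → IsUnit a) {n d : ℕ} (hn : 0 < n) {a b : R}
    (ha : IsUnit a) (hb : b ≠ 0) (hab : n * a * D b = d * b * D a) : IsUnit b := by
  obtain ⟨A, hA⟩ := ha.exists_right_inv
  set w := b ^ n * A ^ d with hw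
  have hwa : w * a ^ d = b ^ n := by
    rw [hw, mul_assoc, ← mul_pow, mul_comm A a, hA]; simp
  have h1 : D (w * a ^ d) = D (b ^ n) := by rw [hwa]
  rw [D.leibniz, D.leibniz_pow, D.leibniz_pow] at h1
  simp only [smul_eq_mul, nsmul_eq_mul] at h1
  have hd : (d : R) * a ^ (d - 1) * a = d * a ^ d := by
    rcases d with _ | d
    · simp
    · simp [pow_succ, mul_assoc]
  have hb' : b ^ (n - 1) * b = b ^ n := by
    rw [← pow_succ]; congr 1; omega
  have h2 : D w * a ^ (d + 1) = 0 := by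
    linear_combination a * h1 - w * D a * hd + b ^ (n - 1) * hab + d * D a * hb' - d * D a * hwa
  have h3 : D w = 0 := (ha.pow (d + 1)).mul_left_eq_zero.1 h2
  have h4 : w ≠ 0 := by
    intro h0
    apply hb
    apply hsemi
    exact ⟨n, by rw [← hwa, h0, zero_mul]⟩
  have h5 : IsUnit (b ^ n) := by
    rw [← hwa]; exact (hF w h3 h4).mul (ha.pow d)
  exact (isUnit_pow_iff hn.ne').1 h5

lemma oreLt_prop {n d : ℕ} (hn : IsUnit (n : R)) {a b c : R}
    (ha : IsUnit a) (hc : IsUnit c) (hab : n * a * D b = d * b * D a)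
    (hac : n * a * D c = d * c * D a) : ∃ l, D l = 0 ∧ b = l * c := by
  obtain ⟨C, hC⟩ := hc.exists_right_inv
  have hb : b = (b * C) * c := by rw [mul_assoc, mul_comm C, hC, mul_one]
  refine ⟨b * C, ?_, hb⟩
  set l := b * C
  have h1 : D b = l * D c + c * D l := by
    conv_lhs => rw [hb]
    rw [D.leibniz]; simp
  have h2 : D l * (n * a * c) = 0 := by
    linear_combination hab - n * a * h1 + d * D a * hb - l * hac
  exact ((hn.mul ha).mul hc).mul_left_eq_zero.1 h2

/-- a sum of elements of distinct degrees -/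
lemma oreLt_sum {I : Type*} (s : Finset I) (hs : s.Nonempty) (f : I → S) (g : I → ℕ) (b : I → R)
    (hf : ∀ i ∈ s, oreLt ι x (f i) (g i) (b i)) (hg : ∀ i ∈ s, ∀ j ∈ s, g i = g j → i = j) :
    ∃ i ∈ s, oreLt ι x (∑ j ∈ s, f j) (g i) (b i) := by
  classical
  obtain ⟨i, hi, hmax⟩ := s.exists_max_image g hs
  refine ⟨i, hi, ?_⟩
  unfold oreLt
  rw [← Finset.add_sum_erase s f hi, add_sub_right_comm]
  refine add_mem (hf i hi) (sum_mem ?_)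
  intro j hj
  obtain ⟨hji, hj⟩ := Finset.mem_erase.1 hj
  refine oreV_mono ?_ (hf j hj).mem
  have h1 := hmax j hj
  have h2 : g j ≠ g i := fun h => hji (hg j hj i hi h)
  omega

lemma polysIn_add {F : Set R} (hF : ∀ a ∈ F, ∀ b ∈ F, a + b ∈ F) {P s t : S}
    (hs : s ∈ polysIn ι F P) (ht : t ∈ polysIn ι F P) : s + t ∈ polysIn ι F P := by
  classical
  obtain ⟨c, hc, rfl⟩ := hs
  obtain ⟨d, hd, rfl⟩ := ht
  refine ⟨c + d, fun j => hF _ (hc j) _ (hd j), ?_⟩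
  rw [Finsupp.sum_add_index'] <;> simp [add_mul]

lemma polysIn_neg {F : Set R} (hF : ∀ a ∈ F, - a ∈ F) {P s : S}
    (hs : s ∈ polysIn ι F P) : - s ∈ polysIn ι F P := by
  classical
  obtain ⟨c, hc, rfl⟩ := hs
  refine ⟨-c, fun j => hF _ (hc j), ?_⟩
  rw [Finsupp.sum_neg_index] <;> simp [Finsupp.sum]

lemma polysIn_single {F : Set R} (h0 : (0 : R) ∈ F) {P : S} {b : R} (hb : b ∈ F) (k : ℕ) :
    ι b * P ^ k ∈ polysIn ι F P := by
  classical
  refine ⟨Finsupp.single k b, fun j => ?_, by simp⟩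
  rw [Finsupp.single_apply]
  split_ifs <;> assumption

lemma polysIn_zero {F : Set R} (h0 : (0 : R) ∈ F) {P : S} : 0 ∈ polysIn ι F P :=
  ⟨0, fun _ => h0, by simp⟩

lemma polysIn_lt (hx : ∀ r, x * ι r = ι r * x + ι (D r))
    (hF : ∀ a, D a = 0 → a ≠ 0 → IsUnit a) {n : ℕ} (hn : 0 < n) {a : R} (ha : IsUnit a)
    {P : S} (hP : oreLt ι x P n a) {s : S} (hs : s ∈ polysIn ι {a | D a = 0} P) (h0 : s ≠ 0) :
    ∃ k b, IsUnit b ∧ oreLt ι x s (n * k) b := by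
  obtain ⟨c, hc, rfl⟩ := hs
  have hne : c.support.Nonempty := by
    rw [Finset.nonempty_iff_ne_empty]
    intro he
    rw [Finsupp.support_eq_empty] at he
    exact h0 (by simp [he])
  obtain ⟨k, hk, hlt⟩ := oreLt_sum (ι := ι) (x := x) c.support hne (fun j => ι (c j) * P ^ j)
    (fun j => 0 + n * j) (fun j => c j * a ^ j)
    (fun j _ => (oreLt_const (c j)).mul hx (hP.pow hx j))
    (fun i _ j _ hij => by
      simp only [zero_add] at hij
      exact Nat.eq_of_mul_eq_mul_left hn hij)
  refine ⟨k, c k * a ^ k, (hF _ (hc k) (Finsupp.mem_support_iff.1 hk)).mul (ha.pow k), ?_⟩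
  simpa [Finsupp.sum] using hlt

lemma ore_free (hsemi : ∀ a : R, IsNilpotent a → a = 0)
    (hx : ∀ r, x * ι r = ι r * x + ι (D r))
    (hind : ∀ b d, ι b * x ^ d ∈ oreV ι x d → b = 0)
    (hex : ∀ s : S, ∃ d, s ∈ oreV ι x d)
    (hcen : ∀ a, D a = 0 → ∀ s : S, ι a * s = s * ι a)
    (hF : ∀ a, D a = 0 → a ≠ 0 → IsUnit a) {n : ℕ} (hn : 0 < n) (hnu : IsUnit (n : R))
    (h01 : (0 : R) ≠ 1)
    {a : R} (ha : IsUnit a) {P : S} (hP : oreLt ι x P n a) :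
    IsFreeModuleOfRankAtMost (polysIn ι {a | D a = 0} P) (centralizerOf P) n := by
  classical
  have : Nontrivial R := ⟨0, 1, h01⟩
  have hFadd : ∀ a ∈ {a | D a = 0}, ∀ b ∈ {a | D a = 0}, a + b ∈ {a | D a = 0} := by
    intro a ha b hb
    simp only [Set.mem_ofPred_eq] at *
    rw [map_add, ha, hb, add_zero]
  have hFneg : ∀ a ∈ {a | D a = 0}, - a ∈ {a | D a = 0} := by
    intro a ha
    simp only [Set.mem_ofPred_eq] at *
    rw [map_neg, ha, neg_zero]
  have hF0 : (0 : R) ∈ {a | D a = 0} := map_zero D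
  -- degrees occurring in the centralizer
  let T : ℕ → Prop := fun d => ∃ Q ∈ centralizerOf P, ∃ b, IsUnit b ∧ oreLt ι x Q d b
  let I := {r : Fin n // ∃ d, T d ∧ d % n = r}
  let g : I → ℕ := fun r => Nat.find r.2
  have hg : ∀ r : I, T (g r) ∧ g r % n = r.1 := fun r => Nat.find_spec r.2
  have hgmin : ∀ (r : I) d, T d → d % n = r.1 → g r ≤ d :=
    fun r d h1 h2 => Nat.find_min' r.2 ⟨h1, h2⟩
  choose u hu ub hub hult using fun r => (hg r).1
  have hT : ∀ Q ∈ centralizerOf P, ∀ d b, b ≠ 0 → oreLt ι x Q d b → IsUnit b :=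
    fun Q hQ d b hb hlt => oreLt_unit hsemi hF hn ha hb (oreLt_comm hx hind hn hP hlt hQ)
  have span : ∀ d, ∀ e ∈ centralizerOf P, e ∈ oreV ι x d →
      ∃ c : I → S, (∀ i, c i ∈ polysIn ι {a | D a = 0} P) ∧ e = ∑ i, c i * u i := by
    intro d
    induction d with
    | zero =>
      intro e _ he
      exact ⟨fun _ => 0, fun _ => polysIn_zero hF0, by simp [oreV_zero he]⟩
    | succ d ih =>
      intro e heC he
      obtain ⟨b, hb⟩ := oreV_succ he
      by_cases h0 : b = 0
      · subst h0
        exact ih e heC (by simpa [oreLt] using hb)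
      have hbu := hT e heC d b h0 hb
      have hTd : T d := ⟨e, heC, b, hbu, hb⟩
      let i : I := ⟨⟨d % n, Nat.mod_lt _ hn⟩, d, hTd, rfl⟩
      have hle : g i ≤ d := hgmin i d hTd rfl
      have hmod : g i % n = d % n := (hg i).2
      obtain ⟨k, hk⟩ : n ∣ d - g i := (Nat.modEq_iff_dvd' hle).1 hmod
      have hdk : n * k + g i = d := by omega
      have hv : oreLt ι x (P ^ k * u i) d (a ^ k * ub i) := by
        rw [← hdk]; exact (hP.pow hx k).mul hx (hult i)
      have hPk : P ^ k * P = P * P ^ k := by rw [← pow_succ, ← pow_succ']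
      have hui : u i * P = P * u i := hu i
      have heP : e * P = P * e := heC
      have hvC : P ^ k * u i * P = P * (P ^ k * u i) := by
        rw [mul_assoc, hui, ← mul_assoc, hPk, mul_assoc]
      obtain ⟨l, hl, hbl⟩ := oreLt_prop hnu ha ((ha.pow k).mul (hub i))
        (oreLt_comm hx hind hn hP hb heC) (oreLt_comm hx hind hn hP hv hvC)
      have hlv : oreLt ι x (ι l * (P ^ k * u i)) d b := by
        have := (oreLt_const (ι := ι) (x := x) l).mul hx hv
        rwa [zero_add, ← hbl] at this
      obtain ⟨c, hc, hsum⟩ := ih (e - ι l * (P ^ k * u i)) (by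
          show _ * P = P * _
          rw [sub_mul, mul_sub, heP, mul_assoc, hvC, ← mul_assoc, hcen l hl P, mul_assoc])
        (by
          convert sub_mem hb hlv using 1
          abel)
      refine ⟨fun j => c j + if j = i then ι l * P ^ k else 0, fun j => ?_, ?_⟩
      · refine polysIn_add hFadd (hc j) ?_
        split_ifs
        · exact polysIn_single hF0 hl k
        · exact polysIn_zero hF0
      · have hs1 : ∑ j, (if j = i then ι l * P ^ k else 0) * u j = ι l * (P ^ k * u i) := by
          rw [Finset.sum_eq_single i]
          · rw [if_pos rfl, mul_assoc]
          · intro j _ hj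
            rw [if_neg hj, zero_mul]
          · intro hi
            exact absurd (Finset.mem_univ i) hi
        simp only [add_mul, Finset.sum_add_distrib]
        rw [hs1, ← hsum]
        abel
  have indep : ∀ c : I → S, (∀ i, c i ∈ polysIn ι {a | D a = 0} P) → ∑ i, c i * u i = 0 →
      ∀ i, c i = 0 := by
    intro c hc hsum
    by_contra! hne
    obtain ⟨i₀, hi₀⟩ := hne
    have key : ∀ i, ∃ k b, c i ≠ 0 → IsUnit b ∧ oreLt ι x (c i) (n * k) b := by
      intro i
      by_cases h0 : c i = 0
      · exact ⟨0, 0, fun h => absurd h0 h⟩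
      · obtain ⟨k, b, h⟩ := polysIn_lt hx hF hn ha hP (hc i) h0
        exact ⟨k, b, fun _ => h⟩
    choose k b hkb using key
    obtain ⟨i, hi, hlt⟩ := oreLt_sum (ι := ι) (x := x) (Finset.univ.filter fun i => c i ≠ 0)
      ⟨i₀, by simpa using hi₀⟩ (fun i => c i * u i) (fun i => n * k i + g i)
      (fun i => b i * ub i)
      (fun i hi => ((hkb i (by simpa using hi)).2).mul hx (hult i))
      (fun i _ j _ hij => by
        have h1 : (n * k i + g i) % n = (n * k j + g j) % n := by
          simpa using congrArg (· % n) hij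
        rw [Nat.mul_add_mod, Nat.mul_add_mod, (hg i).2, (hg j).2] at h1
        exact Subtype.ext (Fin.ext h1))
    have hs0 : ∑ j ∈ Finset.univ.filter (fun i => c i ≠ 0), c j * u j = 0 := by
      refine Eq.trans ?_ hsum
      refine Finset.sum_subset (Finset.subset_univ _) fun j _ hj => ?_
      have : c j = 0 := by simpa using hj
      rw [this, zero_mul]
    rw [hs0] at hlt
    have h2 : ι (b i * ub i) * x ^ (n * k i + g i) ∈ oreV ι x (n * k i + g i) := by
      have := neg_mem hlt
      simpa using this
    have h3 := hind _ _ h2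
    have h4 : IsUnit (b i * ub i) := (hkb i (by simpa using hi)).1.mul (hub i)
    exact h4.ne_zero h3
  have hcard : Fintype.card I ≤ n := by
    simpa using Fintype.card_subtype_le (fun r : Fin n => ∃ d, T d ∧ d % n = r)
  let E := Fintype.equivFin I
  refine ⟨Fintype.card I, hcard, fun j => u (E.symm j), fun j => hu _, ?_⟩
  intro e he
  obtain ⟨d, hd⟩ := hex e
  obtain ⟨c, hc, hsum⟩ := span d e he hd
  refine ⟨fun j => c (E.symm j), ⟨fun j => hc _, ?_⟩, ?_⟩
  · rw [hsum]
    exact (Equiv.sum_comp E.symm (fun i => c i * u i)).symm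
  · rintro c' ⟨hc', hsum'⟩
    have h1 : ∑ j, c' j * u (E.symm j) = ∑ i, c' (E i) * u i := by
      rw [← Equiv.sum_comp E]; simp
    have h2 := indep (fun i => c' (E i) + - c i)
      (fun i => polysIn_add hFadd (hc' _) (polysIn_neg hFneg (hc i))) (by
        simp only [add_mul, neg_mul, Finset.sum_add_distrib, Finset.sum_neg_distrib]
        rw [← h1, ← hsum', ← hsum]; abel)
    funext j
    have := h2 (E.symm j)
    simp only [Equiv.apply_symm_apply] at this
    rwa [← sub_eq_add_neg, sub_eq_zero] at this

end OreHelpers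

/-- **Goodearl, Theorem 1.2.** Let `R` be a semiprime commutative ring with a
derivation `δ` whose ring of constants is a field `F`. If `P ∈ S = R[x; id, δ]` has
positive degree `n`, `n` is invertible in `F`, and the leading coefficient of `P` is
invertible in `R`, then `C_S(P)` is a free `F[P]`-module of rank at most `n`. -/
theorem goodearl_centralizer_free [CommRing R] [Ring S]
    (hsemiprime : ∀ a : R, IsNilpotent a → a = 0)
    (ι : R →+* S) (δ : R → R) (x : S) (h : IsOreExtension ι (RingHom.id R) δ x)
    (hF : IsFieldSubset {a : R | δ a = 0})
    (P : S) (n : ℕ) (hn : 0 < n) (hdeg : oreDeg h P = n)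
    (hninv : ∃ b : R, δ b = 0 ∧ (n : R) * b = 1)
    (hlc : IsUnit (oreLeadCoeff h P)) :
    IsFreeModuleOfRankAtMost (polysIn ι {a : R | δ a = 0} P) (centralizerOf P) n := by
  obtain ⟨h01, hfield⟩ := hF
  have hmul : ∀ a b, δ (a * b) = a * δ b + δ a * b := h.deriv_mul
  let δ' : R →+ R := AddMonoidHom.mk' δ h.deriv_add
  let D : Derivation ℤ R R := Derivation.mk' δ'.toIntLinearMap (by
    intro a b
    show δ (a * b) = a • δ b + b • δ a
    rw [hmul, smul_eq_mul, smul_eq_mul, mul_comm (δ a)])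
  have hD : ∀ r, D r = δ r := fun _ => rfl
  have hx : ∀ r, x * ι r = ι r * x + ι (D r) := h.comm_rule
  have hsumV : ∀ (c : ℕ →₀ R) (d : ℕ), (∀ i, d ≤ i → c i = 0) →
      (c.sum fun i r => ι r * x ^ i) ∈ oreV ι x d := by
    intro c d hc
    refine sum_mem fun i hi => oreV_gen _ ?_
    by_contra hlt
    exact Finsupp.mem_support_iff.1 hi (hc i (by omega))
  have hex : ∀ s : S, ∃ d, s ∈ oreV ι x d := by
    intro s
    obtain ⟨c, hc, -⟩ := h.repr_uniq s
    refine ⟨c.support.sup id + 1, ?_⟩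
    rw [hc]
    refine hsumV c _ fun i hi => ?_
    by_contra hne
    have : id i ≤ c.support.sup id := Finset.le_sup (Finsupp.mem_support_iff.2 hne)
    simp only [id] at this
    omega
  have hrep : ∀ d, ∀ s ∈ oreV ι x d, ∃ c : ℕ →₀ R, (∀ i, d ≤ i → c i = 0) ∧
      s = c.sum fun i r => ι r * x ^ i := by
    intro d s hs
    induction hs using AddSubgroup.closure_induction with
    | mem s hs =>
      obtain ⟨r, i, hi, rfl⟩ := hs
      refine ⟨Finsupp.single i r, fun j hj => ?_, by simp⟩
      rw [Finsupp.single_apply, if_neg (by omega)]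
    | zero => exact ⟨0, by simp, by simp⟩
    | add a b _ _ ha hb =>
      obtain ⟨u, hu, rfl⟩ := ha
      obtain ⟨v, hv, rfl⟩ := hb
      refine ⟨u + v, fun i hi => by simp [hu i hi, hv i hi], ?_⟩
      rw [Finsupp.sum_add_index'] <;> simp [add_mul]
    | neg a _ ha =>
      obtain ⟨u, hu, rfl⟩ := ha
      refine ⟨-u, fun i hi => by simp [hu i hi], ?_⟩
      rw [Finsupp.sum_neg_index] <;> simp [Finsupp.sum]
  have hind : ∀ b d, ι b * x ^ d ∈ oreV ι x d → b = 0 := by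
    intro b d hb
    obtain ⟨c, hc, hs⟩ := hrep d _ hb
    have h1 := (h.repr_uniq (ι b * x ^ d)).unique hs
      (show ι b * x ^ d = (Finsupp.single d b).sum fun i r => ι r * x ^ i by simp)
    have h2 := hc d le_rfl
    rw [h1] at h2
    simpa using h2
  have hcenx : ∀ a, D a = 0 → ∀ i, ι a * x ^ i = x ^ i * ι a := by
    intro a ha i
    have h1 : x * ι a = ι a * x := by rw [hx, ha]; simp
    exact ((show Commute x (ι a) from h1).pow_left i).eq.symm
  have hcen : ∀ a, D a = 0 → ∀ s : S, ι a * s = s * ι a := by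
    intro a ha s
    obtain ⟨d, hd⟩ := hex s
    induction hd using AddSubgroup.closure_induction with
    | mem s hs =>
      obtain ⟨r, i, hi, rfl⟩ := hs
      rw [mul_assoc, ← hcenx a ha, ← mul_assoc, ← mul_assoc, ← map_mul, ← map_mul, mul_comm a]
    | zero => simp
    | add a b _ _ ha hb => rw [mul_add, add_mul, ha, hb]
    | neg a _ ha => rw [mul_neg, neg_mul, ha]
  have hFu : ∀ a, D a = 0 → a ≠ 0 → IsUnit a := by
    intro a ha h0
    obtain ⟨b, -, hb⟩ := hfield a ha h0
    exact IsUnit.of_mul_eq_one b hb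
  have hnu : IsUnit (n : R) := by
    obtain ⟨b, -, hb⟩ := hninv
    exact IsUnit.of_mul_eq_one b hb
  have hP : oreLt ι x P n (oreLeadCoeff h P) := by
    have : Nontrivial R := ⟨0, 1, h01⟩
    have hspec : P = (oreCoeff h P).sum fun i r => ι r * x ^ i :=
      (h.repr_uniq P).exists.choose_spec
    have hne := hlc.ne_zero
    unfold oreLeadCoeff at hne ⊢
    rw [hdeg] at hne ⊢
    have hmem : n ∈ (oreCoeff h P).support := Finsupp.mem_support_iff.2 hne
    unfold oreLt
    have h2 : P = ι (oreCoeff h P n) * x ^ n +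
        ∑ i ∈ (oreCoeff h P).support.erase n, ι (oreCoeff h P i) * x ^ i := by
      rw [Finset.add_sum_erase _ (fun i => ι (oreCoeff h P i) * x ^ i) hmem]
      exact hspec
    have h3 : P - ι (oreCoeff h P n) * x ^ n =
        ∑ i ∈ (oreCoeff h P).support.erase n, ι (oreCoeff h P i) * x ^ i :=
      sub_eq_of_eq_add' h2
    rw [h3]
    refine sum_mem fun i hi => oreV_gen _ ?_
    obtain ⟨hin, hi⟩ := Finset.mem_erase.1 hi
    have h4 : id i ≤ (oreCoeff h P).support.sup id := Finset.le_sup hi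
    have h5 : (oreCoeff h P).support.sup id = n := hdeg
    rw [h5] at h4
    simp only [id] at h4
    omega
  exact ore_free hsemiprime hx hind hex hcen hFu hn hnu h01 hlc hP
end
end

section
/- Let R be a semiprime commutative ring of positive characteristic with a derivation δ. If the ring of constants of δ is a field, then R itself is a field. -/
open Finsupp

noncomputable section

variable {R S : Type*}

/-- **Goodearl.** Let `R` be a semiprime commutative ring of positive
characteristic with a derivation `δ`. If the ring of constants of `δ` is a field, then
`R` itself is a field. -/
theorem semiprime_posChar_constants_field [CommRing R]
    (hsemiprime : ∀ a : R, IsNilpotent a → a = 0)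
    (p : ℕ) (hp : 0 < p) (hchar : CharP R p)
    (δ : R → R) (hadd : ∀ a b : R, δ (a + b) = δ a + δ b)
    (hmul : ∀ a b : R, δ (a * b) = a * δ b + δ a * b)
    (hF : IsFieldSubset {a : R | δ a = 0}) :
    IsField R := by
  have hpow : ∀ (a : R) (n : ℕ), δ (a ^ (n + 1)) = ((n + 1 : ℕ) : R) * a ^ n * δ a := by
    intro a n
    induction n with
    | zero => simp
    | succ k ih =>
      rw [pow_succ, hmul, ih]
      push_cast
      ring
  refine ⟨⟨0, 1, hF.1⟩, mul_comm, ?_⟩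
  intro a ha
  obtain ⟨n, rfl⟩ : ∃ n, p = n + 1 := ⟨p - 1, by omega⟩
  have h0 : δ (a ^ (n + 1)) = 0 := by
    rw [hpow, CharP.cast_eq_zero]
    simp
  have h1 : a ^ (n + 1) ≠ 0 := fun h => ha (hsemiprime a ⟨n + 1, h⟩)
  obtain ⟨b, -, hb⟩ := hF.2 _ h0 h1
  exact ⟨a ^ n * b, by rw [← hb]; ring⟩
end
end

section
/- Let 𝕜 be a field with a derivation δ and let F be its subfield of constants. If P is an element of S = 𝕜[x; id_𝕜, δ] of positive degree n with invertible leading coefficient, then C_S(P) is a free F[P]-module of rank at most n². -/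
open Finsupp

noncomputable section

variable {R S : Type*}

section OreAux
set_option linter.unusedSectionVars false
variable {K S : Type*} [Field K] [Ring S] [Module K S] [IsScalarTower K S S]

def oreL (K : Type*) {S : Type*} [Field K] [Ring S] [Module K S] (x : S) (d : ℕ) : Submodule K S :=
  Submodule.span K ((fun i => x ^ i) '' Set.Iio d)

theorem oreL_mono (x : S) {d e : ℕ} (h : d ≤ e) : oreL K x d ≤ oreL K x e :=
  Submodule.span_mono (Set.image_mono (Set.Iio_subset_Iio h))

theorem oreL_pow (x : S) {i d : ℕ} (h : i < d) : x ^ i ∈ oreL K x d :=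
  Submodule.subset_span ⟨i, h, rfl⟩

theorem oreL_x_mul (x : S) (δ : K → K) (hx : ∀ (k : K) (s : S), x * (k • s) = k • (x * s) + δ k • s)
    {d : ℕ} {s : S} (hs : s ∈ oreL K x d) : x * s ∈ oreL K x (d + 1) := by
  induction hs using Submodule.span_induction with
  | mem y hy =>
    obtain ⟨i, hi, rfl⟩ := hy
    simp only [← pow_succ']
    exact oreL_pow x (by simpa using hi)
  | zero => simp
  | add y z _ _ hy hz => rw [mul_add]; exact add_mem hy hz
  | smul k y hy' hy =>
    rw [hx]
    exact add_mem (Submodule.smul_mem _ _ hy)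
      (Submodule.smul_mem _ _ (oreL_mono x (Nat.le_succ d) hy'))

theorem oreL_succ (x : S) {d : ℕ} {s : S} (hs : s ∈ oreL K x (d + 1)) :
    ∃ c : K, s - c • x ^ d ∈ oreL K x d := by
  have : Set.Iio (d + 1) = insert d (Set.Iio d) := by
    ext i; simp only [Set.mem_Iio, Set.mem_insert_iff]; omega
  rw [oreL, this, Set.image_insert_eq, Submodule.mem_span_insert] at hs
  obtain ⟨c, z, hz, rfl⟩ := hs
  exact ⟨c, by simpa [oreL] using hz⟩

variable (x : S) (δ : K → K) (hx : ∀ (k : K) (s : S), x * (k • s) = k • (x * s) + δ k • s)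
  (P : S) (n : ℕ) (a : K) (hP : P - a • x ^ n ∈ oreL K x n)
include hx hP

theorem ore_pow_mul (i : ℕ) : x ^ i * P - a • x ^ (i + n) ∈ oreL K x (i + n) := by
  induction i with
  | zero => simpa using hP
  | succ i ih =>
    have h1 := oreL_x_mul x δ hx ih
    have h2 : δ a • x ^ (i + n) ∈ oreL K x (i + n + 1) :=
      Submodule.smul_mem _ _ (oreL_pow x (Nat.lt_succ_self _))
    have h3 := add_mem h1 h2
    have e : i + 1 + n = i + n + 1 := by ring
    rw [mul_sub, hx] at h3
    rw [e]
    convert h3 using 1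
    rw [pow_succ' x i, pow_succ' x (i + n), mul_assoc]
    abel

theorem ore_mul_mem {d : ℕ} {q : S} (hq : q ∈ oreL K x d) : q * P ∈ oreL K x (d + n) := by
  induction hq using Submodule.span_induction with
  | mem y hy =>
    obtain ⟨i, hi, rfl⟩ := hy
    have hi : i < d := hi
    have h1 := oreL_mono x (by omega : i + n ≤ d + n) (ore_pow_mul x δ hx P n a hP i)
    have h2 : a • x ^ (i + n) ∈ oreL K x (d + n) :=
      Submodule.smul_mem _ _ (oreL_pow x (by omega))
    simpa using add_mem h1 h2
  | zero => simp
  | add y z _ _ hy hz => rw [add_mul]; exact add_mem hy hz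
  | smul k y hy' hy => rw [smul_mul_assoc]; exact Submodule.smul_mem _ _ hy

theorem ore_lead {d : ℕ} {q : S} {c : K} (hq : q - c • x ^ d ∈ oreL K x d) :
    q * P - (c * a) • x ^ (d + n) ∈ oreL K x (d + n) := by
  have h1 := ore_mul_mem x δ hx P n a hP hq
  have h2 := Submodule.smul_mem _ c (ore_pow_mul x δ hx P n a hP d)
  have h3 := add_mem h1 h2
  convert h3 using 1
  rw [sub_mul, smul_mul_assoc, smul_sub, mul_smul]
  abel

theorem ore_cancel (ha : a ≠ 0) (hli : LinearIndependent K (fun i : ℕ => x ^ i))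
    (htop : ∀ s : S, ∃ d, s ∈ oreL K x d) {d : ℕ} {q : S} (h : q * P ∈ oreL K x (d + n)) :
    q ∈ oreL K x d := by
  obtain ⟨D, hD⟩ := htop q
  have key : ∀ D, q ∈ oreL K x (d + D) → q ∈ oreL K x d := by
    intro D
    induction D with
    | zero => exact id
    | succ D ih =>
      intro hq
      apply ih
      obtain ⟨c, hc⟩ := oreL_succ x hq
      have h1 := ore_lead x δ hx P n a hP hc
      have h2 := oreL_mono x (by omega : d + n ≤ d + D + n) h
      have h3 := sub_mem h2 h1
      rw [sub_sub_cancel] at h3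
      have : c * a = 0 := by
        by_contra hne
        have h4 := (Submodule.smul_mem_iff _ hne).1 h3
        exact (hli.notMem_span_image (s := Set.Iio (d + D + n)) (x := d + D + n) (by simp)) h4
      have hc0 : c = 0 := by simpa [ha] using this
      simpa [hc0] using hc
  exact key D (oreL_mono x (by omega) hD)

theorem ore_div (ha : a ≠ 0) (htop : ∀ s : S, ∃ d, s ∈ oreL K x d) (s : S) :
    ∃ q : S, s - q * P ∈ oreL K x n := by
  obtain ⟨D, hD⟩ := htop s
  have key : ∀ D, ∀ s ∈ oreL K x (n + D), ∃ q : S, s - q * P ∈ oreL K x n := by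
    intro D
    induction D with
    | zero => intro s hs; exact ⟨0, by simpa using hs⟩
    | succ D ih =>
      intro s hs
      obtain ⟨c, hc⟩ : ∃ c : K, s - c • x ^ (n + D) ∈ oreL K x (n + D) := oreL_succ x hs
      have h1 := ore_pow_mul x δ hx P n a hP D
      have h2 := Submodule.smul_mem _ (c * a⁻¹) h1
      rw [add_comm D n] at h2
      have h3 := sub_mem hc h2
      obtain ⟨q, hq⟩ := ih _ h3
      refine ⟨q + (c * a⁻¹) • x ^ D, ?_⟩
      convert hq using 1
      rw [smul_sub, smul_smul, mul_assoc, inv_mul_cancel₀ ha, mul_one, add_mul, smul_mul_assoc]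
      abel
  exact key D s (oreL_mono x (by omega) hD)

omit hx hP

/-- The left ideal generated by `P`, as a `K`-subspace. -/
def oreI (K : Type*) {S : Type*} [Field K] [Ring S] [Module K S] [IsScalarTower K S S] (P : S) :
    Submodule K S where
  carrier := {s | ∃ q, s = q * P}
  add_mem' := by rintro _ _ ⟨q, rfl⟩ ⟨r, rfl⟩; exact ⟨q + r, (add_mul _ _ _).symm⟩
  zero_mem' := ⟨0, by simp⟩
  smul_mem' := by rintro k _ ⟨q, rfl⟩; exact ⟨k • q, (smul_mul_assoc _ _ _).symm⟩

include hx hP in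
theorem ore_finrank (ha : a ≠ 0) (htop : ∀ s : S, ∃ d, s ∈ oreL K x d) :
    Module.Finite K (S ⧸ oreI K P) ∧ Module.finrank K (S ⧸ oreI K P) ≤ n := by
  classical
  have hspan : Submodule.span K (Set.range fun i : Fin n => (oreI K P).mkQ (x ^ (i : ℕ))) = ⊤ := by
    rw [eq_top_iff]
    rintro y -
    obtain ⟨s, rfl⟩ := (oreI K P).mkQ_surjective y
    obtain ⟨q, hq⟩ := ore_div x δ hx P n a hP ha htop s
    have e : (oreI K P).mkQ s = (oreI K P).mkQ (s - q * P) := by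
      rw [map_sub, eq_comm, sub_eq_self]
      exact (Submodule.Quotient.mk_eq_zero _).2 ⟨q, rfl⟩
    rw [e]
    have := Submodule.mem_map_of_mem (f := (oreI K P).mkQ) hq
    rw [oreL, Submodule.map_span] at this
    refine Submodule.span_mono ?_ this
    rintro _ ⟨_, ⟨i, hi, rfl⟩, rfl⟩
    exact ⟨⟨i, hi⟩, rfl⟩
  refine ⟨⟨⟨(Set.finite_range _).toFinset, by simpa using hspan⟩⟩, ?_⟩
  have := finrank_range_le_card (R := K) (fun i : Fin n => (oreI K P).mkQ (x ^ (i : ℕ)))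
  rw [Set.finrank, hspan, finrank_top] at this
  simpa using this

theorem ore_central (F : Subfield K) (hF : ∀ c : K, c ∈ F ↔ δ c = 0)
    (hx : ∀ (k : K) (s : S), x * (k • s) = k • (x * s) + δ k • s)
    (htop : ∀ s : S, ∃ d, s ∈ oreL K x d) {c : K} (hc : c ∈ F) (s t : S) :
    s * (c • t) = c • (s * t) := by
  obtain ⟨d, hd⟩ := htop s
  induction hd using Submodule.span_induction with
  | mem y hy =>
    obtain ⟨i, hi, rfl⟩ := hy
    clear hi
    simp only
    induction i generalizing t with
    | zero => simp
    | succ i ih => rw [pow_succ, mul_assoc, hx, (hF c).1 hc, zero_smul, add_zero, ih, mul_assoc]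
  | zero => simp
  | add y z _ _ hy hz => rw [add_mul, hy, hz, add_mul, smul_add]
  | smul k y _ hy => rw [smul_mul_assoc, hy, smul_mul_assoc, smul_comm]

theorem ore_wronsk (F : Subfield K) (hF : ∀ c : K, c ∈ F ↔ δ c = 0)
    (hx : ∀ (k : K) (s : S), x * (k • s) = k • (x * s) + δ k • s)
    {m : ℕ} (u : Fin m → S) (hu : LinearIndependent F (fun i => (oreI K P).mkQ (u i)))
    (t : Finset (Fin m)) : ∀ k : Fin m → K,
      (∀ s : S, ∑ i ∈ t, k i • (s * u i) ∈ oreI K P) → ∀ i ∈ t, k i = 0 := by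
  classical
  induction t using Finset.induction_on with
  | empty => simp
  | insert j t hj ih =>
    intro k hk
    by_cases hkj : k j = 0
    · have := ih k (fun s => by simpa [Finset.sum_insert hj, hkj] using hk s)
      intro i hi
      rcases Finset.mem_insert.1 hi with rfl | hi
      · exact hkj
      · exact this i hi
    exfalso
    set l : Fin m → K := fun i => (k j)⁻¹ * k i with hl
    have hlj : l j = 1 := by simp [hl, hkj]
    have h1 : ∀ s : S, ∑ i ∈ insert j t, l i • (s * u i) ∈ oreI K P := by
      intro s
      have := Submodule.smul_mem _ (k j)⁻¹ (hk s)
      simpa [hl, Finset.smul_sum, mul_smul] using this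
    have h2 : ∀ s : S, ∑ i ∈ insert j t, δ (l i) • (s * u i) ∈ oreI K P := by
      intro s
      have e1 : x * ∑ i ∈ insert j t, l i • (s * u i) ∈ oreI K P := by
        obtain ⟨q, hq⟩ := h1 s
        exact ⟨x * q, by rw [hq, mul_assoc]⟩
      have e2 := sub_mem e1 (h1 (x * s))
      convert e2 using 1
      rw [Finset.mul_sum, ← Finset.sum_sub_distrib]
      refine Finset.sum_congr rfl fun i _ => ?_
      rw [hx, mul_assoc]; abel
    have hδ1 : δ (l j) = 0 := by rw [hlj]; exact (hF 1).1 F.one_mem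
    have h3 := ih (fun i => δ (l i)) (fun s => by
      simpa [Finset.sum_insert hj, hδ1] using h2 s)
    have h4 : ∀ i ∈ insert j t, l i ∈ F := by
      intro i hi
      rw [hF]
      rcases Finset.mem_insert.1 hi with rfl | hi
      · exact hδ1
      · exact h3 i hi
    have h5 := linearIndependent_iff'.1 hu (insert j t)
      (fun i => if h : l i ∈ F then ⟨l i, h⟩ else 0) (by
        have h6 := (Submodule.Quotient.mk_eq_zero _).2 (h1 1)
        rw [← Submodule.mkQ_apply, map_sum] at h6
        rw [← h6]
        refine Finset.sum_congr rfl fun i hi => ?_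
        rw [dif_pos (h4 i hi), one_mul, map_smul]
        rfl) j (Finset.mem_insert_self _ _)
    rw [dif_pos (h4 j (Finset.mem_insert_self _ _))] at h5
    have := congrArg Subtype.val h5
    simp [hlj] at this

theorem ore_bound (F : Subfield K) (hF : ∀ c : K, c ∈ F ↔ δ c = 0)
    (hx : ∀ (k : K) (s : S), x * (k • s) = k • (x * s) + δ k • s)
    (hP : P - a • x ^ n ∈ oreL K x n)
    (ha : a ≠ 0) (htop : ∀ s : S, ∃ d, s ∈ oreL K x d)
    {m : ℕ} (u : Fin m → S) (huc : ∀ i, u i * P = P * u i)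
    (hu : LinearIndependent F (fun i => (oreI K P).mkQ (u i))) : m ≤ n ^ 2 := by
  obtain ⟨hfin, hrank⟩ := ore_finrank x δ hx P n a hP ha htop
  have hli : LinearIndependent K
      (fun i : Fin m => fun j : Fin n => (oreI K P).mkQ (x ^ (j : ℕ) * u i)) := by
    rw [Fintype.linearIndependent_iff]
    intro k hk i
    refine ore_wronsk x δ P F hF hx u hu Finset.univ k ?_ i (Finset.mem_univ _)
    intro s
    obtain ⟨q, hq⟩ := ore_div x δ hx P n a hP ha htop s
    have h1 : ∀ r ∈ oreL K x n, ∑ i, k i • (r * u i) ∈ oreI K P := by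
      intro r hr
      induction hr using Submodule.span_induction with
      | mem y hy =>
        obtain ⟨j, hj, rfl⟩ := hy
        have := congrFun hk ⟨j, hj⟩
        rw [← Submodule.Quotient.mk_eq_zero, ← Submodule.mkQ_apply, map_sum]
        simpa [Finset.sum_apply] using this
      | zero => simp
      | add y z _ _ hy hz =>
        simp only [add_mul, smul_add, Finset.sum_add_distrib]
        exact add_mem hy hz
      | smul c y _ hy =>
        have := Submodule.smul_mem _ c hy
        simpa [Finset.smul_sum, smul_comm c, smul_mul_assoc] using this
    have h2 : ∑ i, k i • (q * P * u i) ∈ oreI K P := by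
      refine Submodule.sum_mem _ fun i _ => Submodule.smul_mem _ _ ⟨q * u i, ?_⟩
      rw [mul_assoc, mul_assoc, huc]
    have h3 := add_mem (h1 _ hq) h2
    rw [← Finset.sum_add_distrib] at h3
    convert h3 using 1
    refine Finset.sum_congr rfl fun i _ => ?_
    rw [← smul_add, ← add_mul, sub_add_cancel]
  have := hli.fintype_card_le_finrank
  rw [Module.finrank_pi_fintype] at this
  simp at this
  nlinarith

/-- Good bases: existence of an adapted family. -/
theorem ore_adapted (F : Subfield K) (hF : ∀ c : K, c ∈ F ↔ δ c = 0)
    (hx : ∀ (k : K) (s : S), x * (k • s) = k • (x * s) + δ k • s)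
    (hP : P - a • x ^ n ∈ oreL K x n)
    (ha : a ≠ 0) (htop : ∀ s : S, ∃ d, s ∈ oreL K x d) :
    ∃ m ≤ n ^ 2, ∃ u : Fin m → S, (∀ i, u i * P = P * u i) ∧
      LinearIndependent F (fun i => (oreI K P).mkQ (u i)) ∧
      ∀ d, ∀ e ∈ oreL K x d, e * P = P * e → ∃ c : Fin m → F,
        e - ∑ i, (c i : K) • u i ∈ oreI K P ∧ ∑ i, (c i : K) • u i ∈ oreL K x d := by
  classical
  let Q : ℕ → Prop := fun m => ∃ u : Fin m → S, (∀ i, u i * P = P * u i) ∧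
      LinearIndependent F (fun i => (oreI K P).mkQ (u i))
  have hQ0 : Q 0 := ⟨Fin.elim0, fun i => i.elim0, linearIndependent_empty_type⟩
  have hQb : ∀ m, Q m → m ≤ n ^ 2 := fun m ⟨u, h1, h2⟩ =>
    ore_bound x δ P n a F hF hx hP ha htop u h1 h2
  set m := Nat.findGreatest Q (n ^ 2) with hm
  have hQm : Q m := Nat.findGreatest_spec (Nat.zero_le _) hQ0
  have hQm1 : ¬ Q (m + 1) := fun hq => by
    have := Nat.le_findGreatest (hQb _ hq) hq
    omega
  let dg : S → ℕ := fun s => Nat.find (htop s)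
  have hdg : ∀ s, s ∈ oreL K x (dg s) := fun s => Nat.find_spec (htop s)
  have hdg' : ∀ s d, s ∈ oreL K x d → dg s ≤ d := fun s d h => Nat.find_min' (htop s) h
  let T : ℕ → Prop := fun N => ∃ u : Fin m → S, (∀ i, u i * P = P * u i) ∧
      LinearIndependent F (fun i => (oreI K P).mkQ (u i)) ∧ ∑ i, dg (u i) = N
  have hT : ∃ N, T N := by
    obtain ⟨u, h1, h2⟩ := hQm
    exact ⟨_, u, h1, h2, rfl⟩
  obtain ⟨u, hu1, hu2, hu3⟩ := Nat.find_spec hT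
  have hmin : ∀ v : Fin m → S, (∀ i, v i * P = P * v i) →
      LinearIndependent F (fun i => (oreI K P).mkQ (v i)) → ∑ i, dg (u i) ≤ ∑ i, dg (v i) := by
    intro v h1 h2
    rw [hu3]
    exact Nat.find_min' hT ⟨v, h1, h2, rfl⟩
  refine ⟨m, hQb m hQm, u, hu1, hu2, ?_⟩
  intro d e he hec
  have hspan : (oreI K P).mkQ e ∈ Submodule.span F (Set.range fun i => (oreI K P).mkQ (u i)) := by
    by_contra hne
    refine hQm1 ⟨Fin.snoc u e, ?_, ?_⟩
    · intro i
      refine Fin.lastCases ?_ (fun i => ?_) i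
      · simpa using hec
      · simpa using hu1 i
    · have := linearIndependent_finSnoc.2 ⟨hu2, hne⟩
      have e0 : (fun i => (oreI K P).mkQ ((Fin.snoc u e : Fin (m + 1) → S) i)) =
          (Fin.snoc (fun i => (oreI K P).mkQ (u i)) ((oreI K P).mkQ e) : Fin (m + 1) → _) := by
        funext i
        refine Fin.lastCases ?_ (fun i => ?_) i <;> simp
      rw [e0]; exact this
  obtain ⟨c, hc⟩ := (Submodule.mem_span_range_iff_exists_fun F).1 hspan
  refine ⟨c, ?_, ?_⟩
  · rw [← Submodule.Quotient.mk_eq_zero, ← Submodule.mkQ_apply, map_sub, ← hc, map_sum, sub_eq_zero]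
    refine Finset.sum_congr rfl fun i _ => ?_
    rw [map_smul]; rfl
  · refine Submodule.sum_mem _ fun j _ => ?_
    by_cases hcj : c j = 0
    · simp [hcj]
    refine Submodule.smul_mem _ _ ?_
    by_contra hlt
    have hlt' : dg e < dg (u j) := by
      by_contra hle
      exact hlt (oreL_mono x ((not_lt.1 hle).trans (hdg' e d he)) (hdg (u j)))
    have h1 := hmin (Function.update u j e) (by
      intro i
      by_cases hij : i = j
      · subst hij; simpa using hec
      · simpa [hij] using hu1 i) (by
      rw [Fintype.linearIndependent_iff]
      intro g hg
      have e1 : ∑ i, (if i = j then g j * c j else g i + g j * c i) • (oreI K P).mkQ (u i) = 0 := by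
        rw [← hg, ← Finset.add_sum_erase _ _ (Finset.mem_univ j),
          ← Finset.add_sum_erase _ _ (Finset.mem_univ j), if_pos rfl, Function.update_self, ← hc,
          ← Finset.add_sum_erase _ _ (Finset.mem_univ j), smul_add, smul_smul, add_assoc,
          Finset.smul_sum, ← Finset.sum_add_distrib]
        congr 1
        refine Finset.sum_congr rfl fun i hi => ?_
        have hij := Finset.ne_of_mem_erase hi
        rw [if_neg hij, Function.update_of_ne hij, add_smul, mul_smul, add_comm]
      have e2 := Fintype.linearIndependent_iff.1 hu2 _ e1
      have gj : g j = 0 := by simpa [hcj] using e2 j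
      intro i
      by_cases hij : i = j
      · rw [hij, gj]
      · simpa [hij, gj] using e2 i)
    have h2 : ∑ i, dg (Function.update u j e i) < ∑ i, dg (u i) := by
      refine Finset.sum_lt_sum (fun i _ => ?_) ⟨j, Finset.mem_univ _, by simpa using hlt'⟩
      by_cases hij : i = j
      · subst hij; simpa using hlt'.le
      · simp [hij]
    omega
end OreAux

theorem ore_poly_step {K : Type*} [Field K] [Ring S] (ι : K →+* S) (F : Set K)
    (hF0 : (0 : K) ∈ F) (hadd : ∀ a ∈ F, ∀ b ∈ F, a + b ∈ F) (P : S) {c : S}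
    (hc : c ∈ polysIn ι F P) {b : K} (hb : b ∈ F) : ι b + c * P ∈ polysIn ι F P := by
  classical
  obtain ⟨d, hd, rfl⟩ := hc
  refine ⟨Finsupp.single 0 b + d.mapDomain Nat.succ, ?_, ?_⟩
  · intro j
    rw [Finsupp.add_apply]
    refine hadd _ ?_ _ ?_
    · rw [Finsupp.single_apply]; split_ifs
      · exact hb
      · exact hF0
    · cases j with
      | zero =>
        rw [Finsupp.mapDomain_notin_range]
        · exact hF0
        · simp
      | succ j => rw [Finsupp.mapDomain_apply Nat.succ_injective]; exact hd j
  · rw [Finsupp.sum_add_index' (by simp) (by intros; simp [add_mul]),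
      Finsupp.sum_single_index (by simp),
      Finsupp.sum_mapDomain_index (by simp) (by intros; simp [add_mul]), Finsupp.sum_mul]
    simp [pow_succ, mul_assoc]

/-- **Goodearl, Theorem 1.11.** Let `𝕜` be a field with a derivation `δ` and
`F` its subfield of constants. If `P ∈ S = 𝕜[x; id, δ]` has positive degree `n` and
invertible leading coefficient, then `C_S(P)` is a free `F[P]`-module of rank at most
`n²`. -/
theorem goodearl_centralizer_free_sq {K : Type*} [Field K] [Ring S]
    (ι : K →+* S) (δ : K → K) (x : S) (h : IsOreExtension ι (RingHom.id K) δ x)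
    (P : S) (n : ℕ) (hn : 0 < n) (hdeg : oreDeg h P = n)
    (hlc : IsUnit (oreLeadCoeff h P)) :
    IsFreeModuleOfRankAtMost (polysIn ι {a : K | δ a = 0} P) (centralizerOf P) (n ^ 2) := by
  classical
  letI : Module K S := Module.compHom S ι
  have hsm : ∀ (k : K) (s : S), k • s = ι k * s := fun _ _ => rfl
  haveI : IsScalarTower K S S := ⟨fun k s t => by
    simp only [hsm, smul_eq_mul, mul_assoc]⟩
  have hx : ∀ (k : K) (s : S), x * (k • s) = k • (x * s) + δ k • s := by
    intro k s
    simp only [hsm]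
    rw [← mul_assoc, h.comm_rule, add_mul, mul_assoc]; rfl
  have hmemsum : ∀ (c : ℕ →₀ K) (d : ℕ), (∀ i ∈ c.support, i < d) →
      (c.sum fun i r => ι r * x ^ i) ∈ oreL K x d := by
    intro c d hd
    exact Submodule.sum_mem _ fun i hi => Submodule.smul_mem _ (c i) (oreL_pow x (hd i hi))
  have htop : ∀ s : S, ∃ d, s ∈ oreL K x d := by
    intro s
    obtain ⟨c, hc, -⟩ := h.repr_uniq s
    refine ⟨c.support.sup id + 1, ?_⟩
    rw [hc]
    exact hmemsum c _ fun i hi => Nat.lt_succ_of_le (Finset.le_sup (f := id) hi)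
  have hli : LinearIndependent K (fun i : ℕ => x ^ i) := by
    rw [linearIndependent_iff]
    intro c hc
    refine (h.repr_uniq 0).unique ?_ (by simp)
    rw [← hc, Finsupp.linearCombination_apply]
    rfl
  set a := oreLeadCoeff h P with ha'
  have ha : a ≠ 0 := hlc.ne_zero
  have hPs : P = (oreCoeff h P).sum fun i r => ι r * x ^ i := (h.repr_uniq P).exists.choose_spec
  have hP : P - a • x ^ n ∈ oreL K x n := by
    have h1 : (oreCoeff h P).support ⊆ Finset.range (n + 1) := by
      intro i hi
      rw [Finset.mem_range, ← hdeg]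
      exact Nat.lt_succ_of_le (Finset.le_sup (f := id) hi)
    have h2 : P = ∑ i ∈ Finset.range (n + 1), (oreCoeff h P i) • x ^ i := by
      conv_lhs => rw [hPs]
      rw [Finsupp.sum_of_support_subset _ h1 _ (by simp)]
      rfl
    have h3 : a = oreCoeff h P n := by rw [ha', oreLeadCoeff, hdeg]
    rw [Finset.sum_range_succ, ← h3] at h2
    have h4 : P - a • x ^ n = ∑ i ∈ Finset.range n, (oreCoeff h P i) • x ^ i :=
      sub_eq_of_eq_add h2
    rw [h4]
    exact Submodule.sum_mem _ fun i hi => Submodule.smul_mem _ _ (oreL_pow x (Finset.mem_range.1 hi))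
  have hδm : ∀ a b, δ (a * b) = a * δ b + δ a * b := h.deriv_mul
  have hδ0 : δ 0 = 0 := by simpa using h.deriv_add 0 0
  have hδ1 : δ 1 = 0 := by simpa using hδm 1 1
  have hδneg : ∀ a, δ (-a) = - δ a := by
    intro a
    have := h.deriv_add (-a) a
    rw [neg_add_cancel, hδ0] at this
    exact eq_neg_of_add_eq_zero_left this.symm
  let F : Subfield K :=
    { carrier := {a | δ a = 0}
      mul_mem' := by
        intro a b ha hb
        simp only [Set.mem_setOf_eq] at *
        rw [hδm, ha, hb]; simp
      one_mem' := hδ1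
      add_mem' := by
        intro a b ha hb
        simp only [Set.mem_setOf_eq] at *
        rw [h.deriv_add, ha, hb]; simp
      zero_mem' := hδ0
      neg_mem' := by
        intro a ha
        simp only [Set.mem_setOf_eq] at *
        rw [hδneg, ha]; simp
      inv_mem' := by
        intro a ha
        simp only [Set.mem_setOf_eq] at *
        by_cases h0 : a = 0
        · simp [h0, hδ0]
        have := hδm a a⁻¹
        rw [mul_inv_cancel₀ h0, hδ1, ha] at this
        simpa [h0] using this.symm }
  have hF : ∀ c : K, c ∈ F ↔ δ c = 0 := fun c => Iff.rfl
  have hcancel0 : ∀ q : S, q * P = 0 → q = 0 := by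
    intro q hq
    have : q ∈ oreL K x 0 :=
      ore_cancel x δ hx P n a hP ha hli htop (by rw [hq]; exact Submodule.zero_mem _)
    simpa [oreL] using this
  obtain ⟨m, hm, u, hu1, hu2, hu3⟩ := ore_adapted x δ P n a F hF hx hP ha htop
  have hexist : ∀ d, ∀ e ∈ oreL K x d, e * P = P * e →
      ∃ c : Fin m → S, (∀ i, c i ∈ polysIn ι {a : K | δ a = 0} P) ∧ e = ∑ i, c i * u i := by
    intro d
    induction d using Nat.strong_induction_on with
    | _ d ih =>
    intro e he hec
    by_cases he0 : e = 0
    · exact ⟨0, fun i => ⟨0, by simp [hδ0], by simp⟩, by simp [he0]⟩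
    obtain ⟨b, ⟨q, hq⟩, hb2⟩ := hu3 d e he hec
    have hbc : (∑ i, (b i : K) • u i) * P = P * ∑ i, (b i : K) • u i := by
      rw [Finset.sum_mul, Finset.mul_sum]
      refine Finset.sum_congr rfl fun i _ => ?_
      rw [smul_mul_assoc, ore_central x δ F hF hx htop (b i).2, hu1]
    have hqc : q * P = P * q := by
      have h1 : (q * P - P * q) * P = 0 := by
        rw [sub_mul, mul_assoc P, ← hq, sub_mul, mul_sub, hec, hbc, sub_self]
      exact sub_eq_zero.1 (hcancel0 _ h1)
    have hqP : q * P ∈ oreL K x d := by rw [← hq]; exact sub_mem he hb2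
    have hq' : ∃ c : Fin m → S, (∀ i, c i ∈ polysIn ι {a : K | δ a = 0} P) ∧
        q = ∑ i, c i * u i := by
      cases d with
      | zero => exact absurd (by simpa [oreL] using he) he0
      | succ d =>
        have h2 : q ∈ oreL K x (d + 1 - n) := by
          apply ore_cancel x δ hx P n a hP ha hli htop
          exact oreL_mono x (by omega) hqP
        exact ih (d + 1 - n) (by omega) q h2 hqc
    obtain ⟨c, hc1, hc2⟩ := hq'
    refine ⟨fun i => ι (b i) + c i * P, fun i => ?_, ?_⟩
    · refine ore_poly_step ι {a : K | δ a = 0} hδ0 (fun a ha b hb => F.add_mem ha hb) P (hc1 i) (b i).2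
    · have h3 : e = ∑ i, (b i : K) • u i + q * P := by rw [← hq]; abel
      rw [h3, hc2, Finset.sum_mul, ← Finset.sum_add_distrib]
      refine Finset.sum_congr rfl fun i _ => ?_
      rw [hsm, add_mul, mul_assoc, mul_assoc, hu1]
  have huniq : ∀ N, ∀ d : Fin m → ℕ → K, (∀ i j, d i j ∈ F) →
      ∑ i, (∑ j ∈ Finset.range N, ι (d i j) * P ^ j) * u i = 0 → ∀ i, ∀ j < N, d i j = 0 := by
    intro N
    induction N with
    | zero => intro d _ _ i j hj; omega
    | succ N ih =>
      intro d hd hsum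
      have e1 : ∑ i, (∑ j ∈ Finset.range (N + 1), ι (d i j) * P ^ j) * u i =
          (∑ i, (∑ j ∈ Finset.range N, ι (d i (j + 1)) * P ^ j) * u i) * P +
            ∑ i, d i 0 • u i := by
        rw [Finset.sum_mul, ← Finset.sum_add_distrib]
        refine Finset.sum_congr rfl fun i _ => ?_
        rw [Finset.sum_range_succ', add_mul, mul_assoc _ (u i) P, hu1, ← mul_assoc _ P,
          Finset.sum_mul _ _ P]
        simp [pow_succ, mul_assoc, hsm]
      have h0 : ∀ i, d i 0 = 0 := by
        have h1 : ∑ i, d i 0 • u i ∈ oreI K P := by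
          refine ⟨-∑ i, (∑ j ∈ Finset.range N, ι (d i (j + 1)) * P ^ j) * u i, ?_⟩
          rw [neg_mul]
          rw [hsum] at e1
          exact eq_neg_of_add_eq_zero_right e1.symm
        have h2 := (Submodule.Quotient.mk_eq_zero _).2 h1
        rw [← Submodule.mkQ_apply, map_sum] at h2
        have h3 := Fintype.linearIndependent_iff.1 hu2 (fun i => ⟨d i 0, hd i 0⟩) (by
          rw [← h2]
          refine Finset.sum_congr rfl fun i _ => ?_
          rw [map_smul]; rfl)
        intro i
        exact congrArg Subtype.val (h3 i)
      rw [hsum] at e1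
      simp only [h0, zero_smul, Finset.sum_const_zero, add_zero] at e1
      have h4 := ih (fun i j => d i (j + 1)) (fun i j => hd i _) (hcancel0 _ e1.symm)
      intro i j hj
      cases j with
      | zero => exact h0 i
      | succ j => exact h4 i j (by omega)
  refine ⟨m, hm, u, hu1, ?_⟩
  intro e he
  obtain ⟨d, hd⟩ := htop e
  obtain ⟨c, hc1, hc2⟩ := hexist d e hd he
  refine ⟨c, ⟨hc1, hc2⟩, ?_⟩
  rintro c' ⟨hc1', hc2'⟩
  choose f hf1 hf2 using hc1
  choose g hg1 hg2 using hc1'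
  obtain ⟨N, hN⟩ : ∃ N, ∀ i, (f i).support ⊆ Finset.range N ∧ (g i).support ⊆ Finset.range N := by
    refine ⟨(Finset.univ.sup fun i => (f i).support.sup id ⊔ (g i).support.sup id) + 1,
      fun i => ⟨fun j hj => ?_, fun j hj => ?_⟩⟩
    · rw [Finset.mem_range, Nat.lt_succ_iff]
      exact ((Finset.le_sup (f := id) hj).trans le_sup_left).trans
        (Finset.le_sup (f := fun i => (f i).support.sup id ⊔ (g i).support.sup id)
          (Finset.mem_univ i))
    · rw [Finset.mem_range, Nat.lt_succ_iff]
      exact ((Finset.le_sup (f := id) hj).trans le_sup_right).trans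
        (Finset.le_sup (f := fun i => (f i).support.sup id ⊔ (g i).support.sup id)
          (Finset.mem_univ i))
  have hcf : ∀ i, c i = ∑ j ∈ Finset.range N, ι (f i j) * P ^ j := fun i => by
    rw [hf2 i, Finsupp.sum_of_support_subset _ (hN i).1 _ (by simp)]
  have hcg : ∀ i, c' i = ∑ j ∈ Finset.range N, ι (g i j) * P ^ j := fun i => by
    rw [hg2 i, Finsupp.sum_of_support_subset _ (hN i).2 _ (by simp)]
  have key := huniq N (fun i j => g i j - f i j) (fun i j => F.sub_mem (hg1 i j) (hf1 i j)) (by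
    have : ∑ i, c' i * u i - ∑ i, c i * u i = 0 := by rw [← hc2, ← hc2', sub_self]
    rw [← this, ← Finset.sum_sub_distrib]
    refine Finset.sum_congr rfl fun i _ => ?_
    rw [hcf, hcg, ← sub_mul, ← Finset.sum_sub_distrib]
    simp [sub_mul])
  funext i
  rw [hcf, hcg]
  refine Finset.sum_congr rfl fun j hj => ?_
  rw [sub_eq_zero.1 (key i j (Finset.mem_range.1 hj))]
end
end

section
/- Let R be a semiprime commutative ring with a derivation δ such that the ring of constants is a field F. Let P and Q be commuting elements of R[x; id_R, δ], where P has positive degree and invertible leading coefficient. Then there exists a nonzero polynomial f(s,t) ∈ F[s,t] such that f(P,Q) = 0. -/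
open Finsupp

noncomputable section

variable {R S : Type*}

namespace Goo
open Submodule
section L
variable [CommRing R] [Ring S] [Module R S]

def L (R : Type*) {S : Type*} [CommRing R] [Ring S] [Module R S] (x : S) (M : ℕ) : Submodule R S :=
  span R ((fun i => x ^ i) '' Set.Iio M)

theorem pow_mem (x : S) {i M : ℕ} (h : i < M) : x ^ i ∈ L R x M :=
  subset_span ⟨i, h, rfl⟩

theorem L_mono (x : S) {M N : ℕ} (h : M ≤ N) : L R x M ≤ L R x N :=
  span_mono (Set.image_mono (Set.Iio_subset_Iio h))

theorem L_ind {x : S} {M : ℕ} {p : S → Prop} (h1 : ∀ i < M, p (x ^ i)) (h0 : p 0)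
    (ha : ∀ s ∈ L R x M, ∀ t ∈ L R x M, p s → p t → p (s + t))
    (hs : ∀ (r : R), ∀ s ∈ L R x M, p s → p (r • s)) {s : S} (h : s ∈ L R x M) : p s := by
  refine span_induction (p := fun s _ => p s) ?_ h0 (fun a b h h' => ha a h b h') (fun r s h => hs r s h) h
  rintro _ ⟨i, hi, rfl⟩
  exact h1 i hi

theorem L_zero (x : S) : L R x 0 = ⊥ := by
  simp [L]

theorem mem_L_iff {x : S} (b : Module.Basis ℕ R S) (hb : ∀ i, b i = x ^ i) {M : ℕ} {s : S} :
    s ∈ L R x M ↔ ∀ i, M ≤ i → b.repr s i = 0 := by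
  have : (fun i => x ^ i) = b := by ext i; exact (hb i).symm
  rw [L, this, Module.Basis.mem_span_image]
  constructor
  · intro h i hi
    by_contra h'
    have := h (Finsupp.mem_support_iff.2 h')
    simp at this; omega
  · intro h i hi
    simp only [Set.mem_Iio]
    by_contra h'
    exact (Finsupp.mem_support_iff.1 hi) (h i (by omega))

theorem exists_mem_L {x : S} (b : Module.Basis ℕ R S) (hb : ∀ i, b i = x ^ i) (s : S) :
    ∃ m, s ∈ L R x (m + 1) := by
  refine ⟨(b.repr s).support.sup id, (mem_L_iff b hb).2 fun i hi => ?_⟩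
  by_contra h
  have := Finset.le_sup (f := id) (Finsupp.mem_support_iff.2 h)
  simp at this; omega

theorem sub_lead_mem {x : S} (b : Module.Basis ℕ R S) (hb : ∀ i, b i = x ^ i) {M : ℕ} {s : S}
    (hs : s ∈ L R x (M + 1)) : s - b.repr s M • x ^ M ∈ L R x M := by
  rw [mem_L_iff b hb] at hs ⊢
  intro i hi
  rw [← hb]
  rcases hi.eq_or_lt with rfl | hi
  · simp
  · simp [hs i hi, hi.ne]

variable [IsScalarTower R S S] {x : S} {δ : R →+ R}
  (hx : ∀ (r : R) (s : S), x * (r • s) = r • (x * s) + δ r • s)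
include hx

theorem x_mul_mem {M : ℕ} {s : S} (hs : s ∈ L R x M) : x * s ∈ L R x (M + 1) := by
  refine L_ind (p := fun s => x * s ∈ L R x (M + 1)) ?_ ?_ ?_ ?_ hs
  · intro i hi
    rw [← pow_succ']; exact pow_mem x (by omega)
  · simp
  · intro s _ t _ h h'
    rw [mul_add]; exact add_mem h h'
  · intro r s h h'
    rw [hx]
    exact add_mem (smul_mem _ _ h') (smul_mem _ _ (L_mono x (by omega) h))

theorem xpow_mul_mem {M : ℕ} {s : S} (hs : s ∈ L R x M) (k : ℕ) : x ^ k * s ∈ L R x (M + k) := by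
  induction k with
  | zero => simpa
  | succ k ih => rw [pow_succ', mul_assoc]; exact x_mul_mem hx ih

theorem mul_mem' {M N : ℕ} {s t : S} (hs : s ∈ L R x M) (ht : t ∈ L R x (N + 1)) :
    s * t ∈ L R x (M + N) := by
  refine L_ind (p := fun s => s * t ∈ L R x (M + N)) ?_ ?_ ?_ ?_ hs
  · intro i hi
    exact L_mono x (by omega) (xpow_mul_mem hx ht i)
  · simp
  · intro s _ t _ h h'
    rw [add_mul]; exact add_mem h h'
  · intro r s h h'
    rw [smul_mul_assoc]; exact smul_mem _ _ h'

theorem pow_mem' {N : ℕ} {t : S} (ht : t ∈ L R x (N + 1)) (k : ℕ) :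
    t ^ k ∈ L R x (N * k + 1) := by
  induction k with
  | zero => simpa using pow_mem (R := R) x (i := 0) (M := 1) (by omega)
  | succ k ih =>
    rw [pow_succ]
    exact L_mono x (by rw [mul_add]; omega) (mul_mem' hx ih ht)

theorem commA (r : R) {M : ℕ} {s : S} (hs : s ∈ L R x (M + 1)) (j : ℕ) :
    x ^ j * (r • s) - r • (x ^ j * s) ∈ L R x (M + j) := by
  induction j with
  | zero => simp
  | succ j ih =>
    have : x ^ (j + 1) * (r • s) - r • (x ^ (j + 1) * s) =
      x * (x ^ j * (r • s) - r • (x ^ j * s)) + δ r • (x ^ j * s) := by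
      rw [mul_sub, hx, pow_succ', mul_assoc, mul_assoc]; abel
    rw [this]
    exact add_mem (x_mul_mem hx ih)
      (smul_mem _ _ (L_mono x (by omega) (xpow_mul_mem hx hs j)))

theorem commB (r : R) {M N : ℕ} {s t : S} (hs : s ∈ L R x (M + 1)) (ht : t ∈ L R x (N + 1)) :
    t * (r • s) - r • (t * s) ∈ L R x (M + N) := by
  refine L_ind (p := fun t => t * (r • s) - r • (t * s) ∈ L R x (M + N)) ?_ ?_ ?_ ?_ ht
  · intro i hi
    exact L_mono x (by omega) (commA hx r hs i)
  · simp
  · intro u _ v _ h h'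
    have := add_mem h h'
    convert this using 1
    rw [add_mul, add_mul, smul_add]; abel
  · intro q u _ h
    have := smul_mem _ q h
    convert this using 1
    rw [smul_mul_assoc, smul_mul_assoc, smul_sub, smul_comm]

theorem commC {M N : ℕ} {s t : S} (hs : s ∈ L R x (M + 1)) (ht : t ∈ L R x (N + 1)) :
    t * s - s * t ∈ L R x (M + N) := by
  refine L_ind (p := fun t => t * s - s * t ∈ L R x (M + N)) ?_ ?_ ?_ ?_ ht
  · intro j hj
    refine L_ind (p := fun s => x ^ j * s - s * x ^ j ∈ L R x (M + N)) ?_ ?_ ?_ ?_ hs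
    · intro i hi
      rw [← pow_add, ← pow_add, add_comm i j, sub_self]; exact zero_mem _
    · simp
    · intro u _ v _ h h'
      have := add_mem h h'
      convert this using 1
      rw [add_mul, mul_add]; abel
    · intro q u hu h
      have := add_mem (smul_mem _ q h) (L_mono x (by omega : M + j ≤ M + N) (commA hx q hu j))
      convert this using 1
      rw [smul_mul_assoc, smul_sub]; abel
  · simp
  · intro u _ v _ h h'
    have := add_mem h h'
    convert this using 1
    rw [add_mul, mul_add]; abel
  · intro q u hu h
    have := sub_mem (smul_mem _ q h) (L_mono x (by omega : N + M ≤ M + N) (commB hx q hu hs))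
    convert this using 1
    rw [smul_mul_assoc, smul_sub]; abel

theorem commD (r : R) (j : ℕ) : ∀ (i m : ℕ), j + i = m + 1 →
    x ^ j * (r • x ^ i) - r • x ^ (m + 1) - (j • δ r) • x ^ m ∈ L R x m := by
  induction j with
  | zero =>
    intro i m h
    obtain rfl : i = m + 1 := by omega
    simp
  | succ j ih =>
    intro i m h
    rcases m with _ | m
    · obtain rfl : i = 0 := by omega
      obtain rfl : j = 0 := by omega
      simp [hx]
    · have h1 := x_mul_mem hx (ih i m (by omega))
      have h2 : δ (j • δ r) • x ^ m ∈ L R x (m + 1) := smul_mem _ _ (pow_mem x (by omega))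
      convert add_mem h1 h2 using 1
      rw [mul_sub, mul_sub, hx, hx, pow_succ' x j, mul_assoc, ← pow_succ', ← pow_succ', succ_nsmul, add_smul]
      abel

theorem lead_rel (b : Module.Basis ℕ R S) (hb : ∀ i, b i = x ^ i) {P Q : S} {n M : ℕ}
    (hP : P ∈ L R x (n + 2)) (hQ : Q ∈ L R x (M + 1)) (hPQ : P * Q = Q * P) :
    ((n + 1 : ℕ) : R) * b.repr P (n + 1) * δ (b.repr Q M)
      = M * b.repr Q M * δ (b.repr P (n + 1)) := by
  have hP' := sub_lead_mem b hb hP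
  have hQ' := sub_lead_mem b hb hQ
  set a := b.repr P (n + 1) with ha
  set c := b.repr Q M with hc
  set P' := P - a • x ^ (n + 1)
  set Q' := Q - c • x ^ M
  have e1 : P' * (c • x ^ M) - (c • x ^ M) * P' ∈ L R x (M + n) :=
    commC hx (smul_mem _ _ (pow_mem x (by omega))) hP'
  have e2 : P * Q' - Q' * P ∈ L R x (M + n) := by
    rcases M with _ | M
    · rw [L_zero, mem_bot] at hQ'
      simp [hQ']
    · exact L_mono x (by omega) (commC hx hQ' (N := n + 1) hP)
  have e3 := smul_mem _ a (commD hx c (n + 1) M (M + n) (by omega))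
  have e4 := smul_mem _ c (commD hx a M (n + 1) (M + n) (by omega))
  have e5 : (a * ((n + 1) • δ c) - c * (M • δ a)) • x ^ (M + n) ∈ L R x (M + n) := by
    have := neg_mem (add_mem (add_mem e1 e2) (sub_mem e3 e4))
    convert this using 1
    have hz : P * Q - Q * P = 0 := sub_eq_zero.2 hPQ
    have h1 : P * Q - Q * P = (a • x ^ (n + 1)) * (c • x ^ M) - (c • x ^ M) * (a • x ^ (n + 1))
      + (P' * (c • x ^ M) - (c • x ^ M) * P') + (P * Q' - Q' * P) := by
      simp only [P', Q']
      simp only [sub_mul, mul_sub]; abel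
    rw [hz, smul_mul_assoc, smul_mul_assoc c] at h1
    simp only [smul_sub, sub_smul, smul_smul, mul_comm c a] at *
    rw [← sub_eq_zero]
    refine Eq.trans ?_ h1.symm
    abel
  rw [mem_L_iff b hb] at e5
  have := e5 _ le_rfl
  rw [← hb] at this
  simp at this
  push_cast
  linear_combination this

/-- multiplication by an element with unit leading coefficient -/
theorem lead_mul (b : Module.Basis ℕ R S) (hb : ∀ i, b i = x ^ i) {P T : S} {n M : ℕ}
    (hP : P ∈ L R x (n + 1)) (hT : T ∈ L R x (M + 1)) :
    b.repr (T * P) (M + n) = b.repr T M * b.repr P n := by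
  have hP' := sub_lead_mem b hb hP
  have hT' := sub_lead_mem b hb hT
  set a := b.repr P n with ha
  set c := b.repr T M with hc
  have e1 := mul_mem' hx hT' hP
  have e2 : x ^ M * (P - a • x ^ n) ∈ L R x (M + n) := by
    rw [add_comm]; exact xpow_mul_mem hx hP' M
  have e3 : x ^ M * (a • x ^ n) - a • (x ^ M * x ^ n) ∈ L R x (M + n) := by
    rw [add_comm]; exact commA hx a (pow_mem x (by omega)) M
  have e4 : T * P - (c * a) • b (M + n) ∈ L R x (M + n) := by
    have := add_mem e1 (smul_mem _ c (add_mem e2 e3))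
    convert this using 1
    rw [hb, pow_add, sub_mul, mul_sub, smul_mul_assoc]
    simp only [smul_sub, smul_add, smul_smul]
    abel
  have := (mem_L_iff b hb).1 e4 _ le_rfl
  simp at this
  exact sub_eq_zero.1 this

theorem mem_of_mul_mem (b : Module.Basis ℕ R S) (hb : ∀ i, b i = x ^ i) {P T : S} {n M : ℕ}
    (hP : P ∈ L R x (n + 1)) (hu : IsUnit (b.repr P n)) (hTP : T * P ∈ L R x (M + n)) :
    T ∈ L R x M := by
  obtain ⟨m, hm⟩ := exists_mem_L b hb T
  have key : ∀ k, T ∈ L R x (M + k) → T ∈ L R x M := by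
    intro k
    induction k with
    | zero => exact id
    | succ k ih =>
      intro h
      apply ih
      have h1 := lead_mul hx b hb hP (M := M + k) h
      rw [(mem_L_iff b hb).1 hTP _ (by omega)] at h1
      have h2 : b.repr T (M + k) = 0 := (hu.mul_left_eq_zero).1 h1.symm
      have := sub_lead_mem b hb (M := M + k) h
      simpa [h2] using this
  exact key (m + 1) (L_mono x (by omega) hm)

theorem div_P (b : Module.Basis ℕ R S) (hb : ∀ i, b i = x ^ i) {P : S} {n : ℕ}
    (hP : P ∈ L R x (n + 1)) (hu : IsUnit (b.repr P n)) (s : S) :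
    ∃ T, s - T * P ∈ L R x n := by
  obtain ⟨m, hm⟩ := exists_mem_L b hb s
  have key : ∀ k s, s ∈ L R x (n + k) → ∃ T, s - T * P ∈ L R x n := by
    intro k
    induction k with
    | zero => intro s h; exact ⟨0, by simpa using h⟩
    | succ k ih =>
      intro s h
      obtain ⟨u, hu⟩ := hu
      set T := (b.repr s (n + k) * ↑u⁻¹) • x ^ k with hT
      have hTm : T ∈ L R x (k + 1) := smul_mem _ _ (pow_mem x (by omega))
      have h1 := lead_mul hx b hb hP hTm
      have h2 : b.repr T k = b.repr s (n + k) * ↑u⁻¹ := by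
        rw [hT, ← hb]; simp
      rw [h2, ← hu, mul_assoc, Units.inv_mul, mul_one, add_comm] at h1
      have h3 : s - T * P ∈ L R x (n + k + 1) :=
        sub_mem h (L_mono x (by omega) (mul_mem' hx hTm hP))
      have h4 := sub_lead_mem b hb h3
      rw [map_sub, Finsupp.sub_apply, h1, sub_self, zero_smul, sub_zero] at h4
      obtain ⟨T', hT'⟩ := ih _ h4
      exact ⟨T + T', by rw [add_mul, ← sub_sub]; exact hT'⟩
  exact key (m + 1) s (L_mono x (by omega) hm)
end L

section horiz
universe u v w
variable {K : Type u} {R : Type v} {V : Type w} [Field K] [Field R] [Algebra K R]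
  [AddCommGroup V] [Module R V] [Module K V] [IsScalarTower K R V]

theorem horiz_indep (δ : R →+ R) (h1 : δ 1 = 0) (hK : ∀ r, δ r = 0 → ∃ k, algebraMap K R k = r)
    (X : V →+ V) (hX : ∀ (r : R) v, X (r • v) = r • X v + δ r • v)
    {ι : Type*} (φ : ι → Module.End R V) (hφ : ∀ i v, φ i (X v) = X (φ i v))
    (hli : LinearIndependent K φ) : LinearIndependent R φ := by
  classical
  rw [linearIndependent_iff]
  have key : ∀ (n : ℕ) (l : ι →₀ R), l.support.card ≤ n →
      Finsupp.linearCombination R φ l = 0 → l = 0 := by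
    intro n
    induction n with
    | zero =>
      intro l hl _
      simpa using hl
    | succ n ih =>
      intro l hl h0
      by_contra hne
      obtain ⟨i0, hi0⟩ := Finsupp.ne_iff.1 hne
      simp only [Finsupp.coe_zero, Pi.zero_apply] at hi0
      set l' := (l i0)⁻¹ • l with hl'
      have hl'0 : Finsupp.linearCombination R φ l' = 0 := by rw [hl', map_smul, h0, smul_zero]
      have hl'1 : l' i0 = 1 := by simp [hl', hi0]
      have hsup : l'.support ⊆ l.support := Finsupp.support_smul
      have hd : l'.mapRange δ (map_zero δ) = 0 := by
        apply ih
        · have : (l'.mapRange δ (map_zero δ)).support ⊆ l.support.erase i0 := by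
            intro i hi
            rw [Finset.mem_erase]
            refine ⟨?_, hsup (Finsupp.support_mapRange hi)⟩
            rintro rfl
            simp [hl'1, h1] at hi
          have h2 := Finset.card_le_card this
          rw [Finset.card_erase_of_mem (Finsupp.mem_support_iff.2 hi0)] at h2
          omega
        · ext v
          have e1 : ∑ i ∈ l'.support, l' i • φ i v = 0 := by
            have := congrArg (fun f : Module.End R V => f v) hl'0
            simpa [Finsupp.linearCombination_apply, Finsupp.sum, LinearMap.sum_apply] using this
          have e2 : ∑ i ∈ l'.support, l' i • φ i (X v) = 0 := by
            have := congrArg (fun f : Module.End R V => f (X v)) hl'0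
            simpa [Finsupp.linearCombination_apply, Finsupp.sum, LinearMap.sum_apply] using this
          have e3 := congrArg X e1
          rw [map_sum, map_zero] at e3
          simp only [hX, Finset.sum_add_distrib] at e3
          simp only [hφ] at e2
          rw [e2, zero_add] at e3
          rw [Finsupp.linearCombination_apply, Finsupp.sum_mapRange_index (by simp), Finsupp.sum,
            LinearMap.sum_apply]
          simpa using e3
      have hk : ∀ i, ∃ k, algebraMap K R k = l' i := fun i => hK _ (by
        have := DFunLike.congr_fun hd i
        simpa using this)
      choose k hk using hk
      have hk0 : ∀ i, l' i = 0 → k i = 0 := fun i hi => by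
        apply (algebraMap K R).injective; rw [hk, hi, map_zero]
      have := (linearIndependent_iff'.1 hli) l'.support k (by
        rw [Finsupp.linearCombination_apply, Finsupp.sum] at hl'0
        rw [← hl'0]
        refine Finset.sum_congr rfl fun i _ => ?_
        rw [← hk, algebraMap_smul]) i0 (by simp [hl'1])
      have h3 := hk i0
      rw [this, hl'1, map_zero] at h3
      exact zero_ne_one h3
  exact fun l hl => key _ l le_rfl hl
end horiz

section rk
universe u v
variable {K : Type u} {S E : Type v} [Field K] [AddCommGroup S] [Module K S] [AddCommGroup E]
  [Module K E]

theorem rank_le_add {W W' : Submodule K S} (φ : W →ₗ[K] E) {c : Cardinal}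
    (hker : ∀ w : W, φ w = 0 → (w : S) ∈ W') (hr : Module.rank K (LinearMap.range φ) ≤ c) :
    Module.rank K W ≤ Module.rank K W' + c := by
  rw [← LinearMap.rank_range_add_rank_ker φ, add_comm]
  refine add_le_add ?_ hr
  let g : (LinearMap.ker φ) →ₗ[K] W' :=
    LinearMap.codRestrict W' (W.subtype ∘ₗ (LinearMap.ker φ).subtype)
      (fun w => hker _ (LinearMap.mem_ker.1 w.2))
  refine LinearMap.rank_le_of_injective g ?_
  intro a b hab
  apply Subtype.ext; apply Subtype.ext
  exact congrArg (fun z : W' => (z : S)) hab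
end rk

section main
universe u v
variable {K : Type u} {R : Type u} {S : Type v} [Field K] [CommRing R] [Ring S] [Algebra K R]
  [Algebra K S] [Module R S] [IsScalarTower K R S] [IsScalarTower R S S] {x : S} {δ : R →+ R}

def A (K R : Type*) {S : Type*} [Field K] [CommRing R] [Ring S] [Algebra K R]
    [Algebra K S] [Module R S] [IsScalarTower K R S] (x P : S) (M : ℕ) : Submodule K S :=
  (L R x M).restrictScalars K ⊓ Subalgebra.toSubmodule (Subalgebra.centralizer K {P})

omit [IsScalarTower R S S] in
theorem mem_A {P s : S} {M : ℕ} : s ∈ A K R x P M ↔ s ∈ L R x M ∧ P * s = s * P := by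
  simp [A, Subalgebra.mem_centralizer_iff]

theorem caseI (hred : ∀ a : R, IsNilpotent a → a = 0)
    (hmul : ∀ a b, δ (a * b) = a * δ b + δ a * b)
    (hK : ∀ r, δ r = 0 ↔ ∃ k, algebraMap K R k = r)
    (hx : ∀ (r : R) (s : S), x * (r • s) = r • (x * s) + δ r • s)
    (b : Module.Basis ℕ R S) (hb : ∀ i, b i = x ^ i) {P : S} {n : ℕ}
    (hP : P ∈ L R x (n + 2)) (hu : IsUnit (b.repr P (n + 1))) (hn : ((n + 1 : ℕ) : R) ≠ 0) (M : ℕ) :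
    Module.rank K (A K R x P (M + 1)) ≤ Module.rank K (A K R x P M) + 1 := by
  have hpow : ∀ (r : R) (k : ℕ), δ (r ^ (k + 1)) = (k + 1) * r ^ k * δ r := by
    intro r k
    induction k with
    | zero => simp
    | succ k ih => rw [pow_succ, hmul, ih]; push_cast; ring
  have hpow' : ∀ (r : R) (k : ℕ), r * δ (r ^ k) = k * r ^ k * δ r := by
    intro r k
    cases k with
    | zero =>
      have := hmul 1 1
      simp at this
      simp [this]
    | succ k => rw [hpow]; push_cast; ring
  have hunit : ∀ r, δ r = 0 → r ≠ 0 → IsUnit r := by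
    intro r h h0
    obtain ⟨k, rfl⟩ := (hK r).1 h
    exact (IsUnit.mk0 k (by rintro rfl; simp at h0)).map _
  have hnu : IsUnit ((n + 1 : ℕ) : R) := hunit _ ((hK _).2 ⟨((n + 1 : ℕ) : K), by simp⟩) hn
  obtain ⟨a, ha⟩ := hu
  let φ : S →ₗ[K] S :=
    ((LinearMap.toSpanSingleton R S 1 ∘ₗ Finsupp.lapply M ∘ₗ b.repr.toLinearMap).restrictScalars K)
  have hφ : ∀ s, φ s = b.repr s M • (1 : S) := fun s => rfl
  refine rank_le_add (φ.domRestrict (A K R x P (M + 1))) ?_ ?_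
  · rintro ⟨w, hw⟩ h0
    rw [LinearMap.domRestrict_apply] at h0
    rw [mem_A] at hw ⊢
    refine ⟨?_, hw.2⟩
    have h1 := sub_lead_mem b hb hw.1
    have h2 : b.repr w M = 0 := by
      rw [hφ] at h0
      have := congrArg (fun s => b.repr s 0) h0
      rw [← pow_zero x, ← hb] at this
      simpa using this
    simpa [h2] using h1
  · rw [LinearMap.range_domRestrict]
    have rel : ∀ s ∈ A K R x P (M + 1), ((n + 1 : ℕ) : R) * a * δ (b.repr s M)
        = M * b.repr s M * δ a := by
      intro s hs
      rw [mem_A] at hs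
      rw [ha]; exact lead_rel hx b hb hP hs.1 hs.2
    by_cases hz : ∀ s ∈ A K R x P (M + 1), b.repr s M = 0
    · rw [rank_submodule_le_one_iff]
      have : (A K R x P (M + 1)).map φ = ⊥ := by
        rw [eq_bot_iff]
        rintro _ ⟨s, hs, rfl⟩
        simp [hφ, hz s hs]
      exact ⟨0, zero_mem _, by rw [this]; exact bot_le⟩
    · push Not at hz
      obtain ⟨s, hs, hs0⟩ := hz
      have hrs := rel s hs
      set β := b.repr s M with hβ
      -- β ^ (n+1) * a⁻¹ ^ M constant
      have hβu : IsUnit β := by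
        set c := (↑a⁻¹ : R) with hc
        have hac : (a : R) * c = 1 := by simp [hc]
        have h1 : δ 1 = 0 := by simpa using hmul 1 1
        have hdc : a * δ c + δ a * c = 0 := by rw [← hmul, hac, h1]
        have hd : δ (β ^ (n + 1) * c ^ M) = 0 := by
          have e : (a : R) * c * δ (β ^ (n + 1) * c ^ M) = 0 := by
            rw [hmul, hpow]
            have e1 := hpow' c M
            push_cast at hrs
            linear_combination (a : R) * β ^ (n + 1) * e1 + c ^ (M + 1) * β ^ n * hrs
              + M * c ^ M * β ^ (n + 1) * hdc
          rwa [hac, one_mul] at e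
        have hne : β ^ (n + 1) * c ^ M ≠ 0 := by
          intro h
          have hcu : IsUnit (c ^ M) := (Units.isUnit a⁻¹).pow M
          exact hs0 (hred _ ⟨n + 1, (hcu.mul_left_eq_zero).1 h⟩)
        have := hunit _ hd hne
        exact (isUnit_pow_iff (by omega)).1 (isUnit_of_mul_isUnit_left this)
      rw [rank_submodule_le_one_iff]
      refine ⟨φ s, ⟨s, hs, rfl⟩, ?_⟩
      rintro _ ⟨t, ht, rfl⟩
      have hrt := rel t ht
      rw [Submodule.mem_span_singleton]
      set γ := b.repr t M with hγ
      obtain ⟨w, hw⟩ := hβu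
      set d := (↑w⁻¹ : R) with hd
      have hwd : β * d = 1 := by rw [← hw]; simp [hd]
      have h1 : δ 1 = 0 := by simpa using hmul 1 1
      have hdd : β * δ d + δ β * d = 0 := by rw [← hmul, hwd, h1]
      have hδ : δ (γ * d) = 0 := by
        have hu2 : IsUnit (((n + 1 : ℕ) : R) * a * β) := (hnu.mul a.isUnit).mul (hw ▸ w.isUnit)
        apply hu2.mul_right_eq_zero.1
        rw [hmul]
        linear_combination ((n + 1 : ℕ) : R) * a * γ * hdd - γ * d * hrs + β * d * hrt
      obtain ⟨k, hk⟩ := (hK _).1 hδ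
      refine ⟨k, ?_⟩
      rw [hφ, hφ, ← hβ, ← hγ, ← algebraMap_smul R k, smul_smul, hk]
      congr 1
      linear_combination γ * hwd

end main

section main2
universe u v
variable {K : Type u} {R : Type u} {S : Type v} [Field K] [Field R] [Ring S] [Algebra K R]
  [Algebra K S] [Module R S] [IsScalarTower K R S] [IsScalarTower R S S] {x : S} {δ : R →+ R}

theorem caseII (h1 : δ 1 = 0)
    (hK : ∀ r, δ r = 0 ↔ ∃ k, algebraMap K R k = r)
    (hx : ∀ (r : R) (s : S), x * (r • s) = r • (x * s) + δ r • s)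
    (b : Module.Basis ℕ R S) (hb : ∀ i, b i = x ^ i) {P : S} {n : ℕ}
    (hP : P ∈ L R x (n + 1)) (hu : IsUnit (b.repr P n)) :
    ∃ c : ℕ, ∀ M, Module.rank K (A K R x P (M + n)) ≤ Module.rank K (A K R x P M) + c := by
  let ρ : S → S →ₗ[R] S := fun Q =>
    { toFun := fun s => s * Q, map_add' := fun a c => add_mul a c Q,
      map_smul' := fun r s => smul_mul_assoc r s Q }
  have hρ : ∀ Q s, ρ Q s = s * Q := fun _ _ => rfl
  let N : Submodule R S := LinearMap.range (ρ P)
  have hxN : ∀ s ∈ N, x * s ∈ N := by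
    rintro _ ⟨T, rfl⟩; exact ⟨x * T, mul_assoc _ _ _⟩
  have hfin : Module.Finite R (S ⧸ N) := by
    have : Module.Finite R (L R x n) := Module.Finite.span_of_finite R ((Set.finite_Iio n).image _)
    refine Module.Finite.of_surjective (N.mkQ ∘ₗ (L R x n).subtype) ?_
    intro v
    obtain ⟨s, rfl⟩ := N.mkQ_surjective v
    obtain ⟨T, hT⟩ := div_P hx b hb hP hu s
    refine ⟨⟨_, hT⟩, ?_⟩
    simp only [LinearMap.comp_apply, Submodule.subtype_apply, map_sub, sub_eq_self]
    rw [← LinearMap.mem_ker, Submodule.ker_mkQ]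
    exact ⟨T, rfl⟩
  let X : (S ⧸ N) →+ (S ⧸ N) :=
    QuotientAddGroup.map N.toAddSubgroup N.toAddSubgroup (AddMonoidHom.mulLeft x) hxN
  have hXm : ∀ s, X (N.mkQ s) = N.mkQ (x * s) := fun s => rfl
  have hX : ∀ (r : R) v, X (r • v) = r • X v + δ r • v := by
    intro r v
    obtain ⟨s, rfl⟩ := N.mkQ_surjective v
    rw [← map_smul, hXm, hXm, hx, map_add, map_smul, map_smul]
  refine ⟨Module.finrank R (Module.End R (S ⧸ N)), fun M => ?_⟩
  have hW : ∀ w : A K R x P (M + n), N ≤ N.comap (ρ w) := by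
    rintro ⟨w, hw⟩ _ ⟨T, rfl⟩
    refine ⟨T * w, ?_⟩
    simp only [hρ]
    rw [mul_assoc, mul_assoc, (mem_A.1 hw).2]
  let ψ : A K R x P (M + n) →ₗ[K] Module.End R (S ⧸ N) :=
    { toFun := fun w => N.mapQ N (ρ w) (hW w)
      map_add' := by
        intro w w'
        apply LinearMap.ext; intro v
        obtain ⟨s, rfl⟩ := N.mkQ_surjective v
        simp [hρ, mul_add]
      map_smul' := by
        intro k w
        apply LinearMap.ext; intro v
        obtain ⟨s, rfl⟩ := N.mkQ_surjective v
        simp [hρ] }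
  have hψ : ∀ w s, ψ w (N.mkQ s) = N.mkQ (s * w) := fun w s => rfl
  refine le_trans (rank_le_add (W' := (A K R x P M).map (LinearMap.mulRight K P)) ψ ?_ ?_)
    (add_le_add_left (rank_map_le _ _) _)
  · rintro ⟨w, hw⟩ h0
    have h2 := hψ ⟨w, hw⟩ 1
    rw [h0, LinearMap.zero_apply, one_mul, eq_comm, ← LinearMap.mem_ker, Submodule.ker_mkQ] at h2
    obtain ⟨T, hT⟩ := h2
    rw [hρ] at hT
    dsimp only at hT
    rw [mem_A] at hw
    rw [← hT] at hw
    refine ⟨T, mem_A.2 ⟨mem_of_mul_mem hx b hb hP hu hw.1, ?_⟩, hT⟩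
    have h3 : (P * T - T * P) * P = 0 := by rw [sub_mul, mul_assoc, hw.2, sub_self]
    have h4 : P * T - T * P ∈ L R x 0 :=
      mem_of_mul_mem hx b hb hP hu (by rw [h3]; exact zero_mem _)
    rw [L_zero, mem_bot] at h4
    exact sub_eq_zero.1 h4
  · let B := Module.Basis.ofVectorSpace K (LinearMap.range ψ)
    rw [← B.mk_eq_rank'', Module.finrank_eq_rank]
    have hli : LinearIndependent K (fun i => ((B i : LinearMap.range ψ) : Module.End R (S ⧸ N))) :=
      B.linearIndependent.map' (LinearMap.range ψ).subtype (Submodule.ker_subtype _)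
    refine LinearIndependent.cardinal_le_rank
      (horiz_indep δ h1 (fun r hr => (hK r).1 hr) X hX _ ?_ hli)
    intro i v
    obtain ⟨w, hw⟩ := (B i).2
    rw [← hw]
    obtain ⟨s, rfl⟩ := N.mkQ_surjective v
    rw [hXm, hψ, hψ, hXm, mul_assoc]
end main2

section fin
universe u v
variable {K : Type u} {R : Type u} {S : Type v} [Field K] [CommRing R] [Ring S] [Algebra K R]
  [Algebra K S] [Module R S] [IsScalarTower K R S] [IsScalarTower R S S] {x : S} {δ : R →+ R}

theorem exists_step [Nontrivial R] (hred : ∀ a : R, IsNilpotent a → a = 0)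
    (hmul : ∀ a b, δ (a * b) = a * δ b + δ a * b)
    (hK : ∀ r, δ r = 0 ↔ ∃ k, algebraMap K R k = r)
    (hx : ∀ (r : R) (s : S), x * (r • s) = r • (x * s) + δ r • s)
    (b : Module.Basis ℕ R S) (hb : ∀ i, b i = x ^ i) {P : S} {n : ℕ}
    (hP : P ∈ L R x (n + 2)) (hu : IsUnit (b.repr P (n + 1))) :
    ∃ d c : ℕ, 0 < d ∧
      ∀ M, Module.rank K (A K R x P (M + d)) ≤ Module.rank K (A K R x P M) + c := by
  by_cases hn : ((n + 1 : ℕ) : R) = 0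
  · have hpow : ∀ (r : R) (k : ℕ), δ (r ^ (k + 1)) = ((k + 1 : ℕ) : R) * r ^ k * δ r := by
      intro r k
      induction k with
      | zero => simp
      | succ k ih => rw [pow_succ, hmul, ih]; push_cast; ring
    have hF : IsField R := by
      refine ⟨⟨0, 1, zero_ne_one⟩, mul_comm, fun {r} hr => ?_⟩
      have h1 : δ (r ^ (n + 1)) = 0 := by rw [hpow, hn]; simp
      have h2 : r ^ (n + 1) ≠ 0 := fun h => hr (hred _ ⟨_, h⟩)
      obtain ⟨k, hk⟩ := (hK _).1 h1
      have h3 : IsUnit (r ^ (n + 1)) := by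
        rw [← hk]
        exact (IsUnit.mk0 k (by rintro rfl; simp [← hk] at h2)).map _
      exact ((isUnit_pow_iff (by omega)).1 h3).exists_right_inv
    letI : Field R := hF.toField
    obtain ⟨c, hc⟩ := caseII (K := K) (R := R) (by simpa using hmul 1 1) hK hx b hb hP hu
    exact ⟨n + 1, c, by omega, hc⟩
  · exact ⟨1, 1, one_pos, fun M => by simpa using caseI hred hmul hK hx b hb hP hu hn M⟩

theorem not_indep [Nontrivial R] (hred : ∀ a : R, IsNilpotent a → a = 0)
    (hmul : ∀ a b, δ (a * b) = a * δ b + δ a * b)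
    (hK : ∀ r, δ r = 0 ↔ ∃ k, algebraMap K R k = r)
    (hx : ∀ (r : R) (s : S), x * (r • s) = r • (x * s) + δ r • s)
    (b : Module.Basis ℕ R S) (hb : ∀ i, b i = x ^ i) {P Q : S} {n : ℕ} (hPQ : P * Q = Q * P)
    (hP : P ∈ L R x (n + 2)) (hu : IsUnit (b.repr P (n + 1))) :
    ¬ LinearIndependent K (fun p : ℕ × ℕ => P ^ p.1 * Q ^ p.2) := by
  intro hli
  obtain ⟨d, c, hd, hstep⟩ := exists_step (K := K) hred hmul hK hx b hb hP hu
  have hrank : ∀ M, Module.rank K (A K R x P (M * d)) ≤ ((c * M : ℕ) : Cardinal) := by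
    intro M
    induction M with
    | zero =>
      have : A K R x P (0 * d) = ⊥ := by
        rw [eq_bot_iff]; intro s hs
        have := (mem_A.1 hs).1
        rw [zero_mul, L_zero] at this
        exact this
      rw [this]; simp
    | succ M ih =>
      rw [add_mul, one_mul]
      refine (hstep _).trans ?_
      rw [mul_add, mul_one, Nat.cast_add]
      exact add_le_add_left ih _
  obtain ⟨m, hm⟩ := exists_mem_L b hb Q
  set k := n + 1 + m + 1 with hk
  set N := c * k + 1 with hN
  let f : Fin N × Fin N → A K R x P (k * N * d) := fun p => ⟨P ^ (p.1 : ℕ) * Q ^ (p.2 : ℕ), by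
    rw [mem_A]
    constructor
    · refine L_mono x ?_ (mul_mem' hx (pow_mem' hx (N := n + 1) hP p.1) (pow_mem' hx hm p.2))
      have h1 : (n + 1) * (p.1 : ℕ) ≤ (n + 1) * N := Nat.mul_le_mul_left _ p.1.2.le
      have h2 : m * (p.2 : ℕ) ≤ m * N := Nat.mul_le_mul_left _ p.2.2.le
      calc _ ≤ (n + 1) * N + 1 + m * N := by omega
        _ ≤ k * N := by rw [hk, add_mul (n + 1 + m), add_mul (n + 1)]; omega
        _ ≤ _ := Nat.le_mul_of_pos_right _ hd
    · have : Commute P (P ^ (p.1 : ℕ) * Q ^ (p.2 : ℕ)) :=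
        ((Commute.refl P).pow_right _).mul_right (Commute.pow_right hPQ _)
      exact this⟩
  have hf : LinearIndependent K f := by
    apply LinearIndependent.of_comp (A K R x P (k * N * d)).subtype
    have hinj : Function.Injective (fun p : Fin N × Fin N => ((p.1 : ℕ), (p.2 : ℕ))) := by
      rintro ⟨a, b⟩ ⟨a', b'⟩ h
      simpa [Fin.ext_iff] using h
    exact hli.comp _ hinj
  have h1 := hf.cardinal_lift_le_rank
  have h2 := h1.trans (Cardinal.lift_le.2 (hrank _))
  simp only [Cardinal.mk_fintype, Fintype.card_prod, Fintype.card_fin, Cardinal.lift_natCast,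
    Nat.cast_le] at h2
  have : c * (k * N) = (N - 1) * N := by rw [hN]; simp; ring
  rw [this] at h2
  have := Nat.le_of_mul_le_mul_right h2 (by omega)
  omega
end fin
end Goo

/-- **Goodearl, Theorem 1.13.** Let `R` be a semiprime commutative ring with a
derivation `δ` whose ring of constants is a field `F`. If `P` and `Q` are commuting
elements of `R[x; id, δ]`, where `P` has positive degree and invertible leading
coefficient, then there is a nonzero polynomial `f(s,t)` with coefficients in `F` such
that `f(P,Q) = 0`. -/
theorem goodearl_annihilating_polynomial [CommRing R] [Ring S]
    (hsemiprime : ∀ a : R, IsNilpotent a → a = 0)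
    (ι : R →+* S) (δ : R → R) (x : S) (h : IsOreExtension ι (RingHom.id R) δ x)
    (hF : IsFieldSubset {a : R | δ a = 0})
    (P Q : S) (hPQ : P * Q = Q * P)
    (hdeg : 0 < oreDeg h P) (hlc : IsUnit (oreLeadCoeff h P)) :
    ∃ c : ℕ × ℕ →₀ R, c ≠ 0 ∧ (∀ p, c p ∈ {a : R | δ a = 0}) ∧
      (c.sum fun p b => ι b * P ^ p.1 * Q ^ p.2) = 0 := by
  have hmul : ∀ a b, δ (a * b) = a * δ b + δ a * b := h.deriv_mul
  let δ' : R →+ R := AddMonoidHom.mk' δ h.deriv_add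
  have hδ' : ∀ r, δ' r = δ r := fun _ => rfl
  have hcomm : ∀ r, x * ι r = ι r * x + ι (δ r) := h.comm_rule
  have h1 : δ 1 = 0 := by simpa using hmul 1 1
  haveI : Nontrivial R := ⟨⟨0, 1, hF.1⟩⟩
  let F : Subring R :=
    { carrier := {a | δ a = 0}
      mul_mem' := by
        intro a b ha hb
        simp only [Set.mem_ofPred_eq] at *
        rw [hmul, ha, hb]; simp
      one_mem' := h1
      add_mem' := by
        intro a b ha hb
        simp only [Set.mem_ofPred_eq] at *
        rw [h.deriv_add, ha, hb]; simp
      zero_mem' := map_zero δ'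
      neg_mem' := by
        intro a ha
        simp only [Set.mem_ofPred_eq] at *
        rw [← hδ', map_neg, hδ', ha, neg_zero] }
  have hFm : ∀ a, a ∈ F ↔ δ a = 0 := fun _ => Iff.rfl
  have hFF : IsField F := by
    refine ⟨⟨0, 1, zero_ne_one⟩, mul_comm, ?_⟩
    rintro ⟨a, ha⟩ hne
    obtain ⟨b, hb, hab⟩ := hF.2 a ha (fun h => hne (Subtype.ext h))
    exact ⟨⟨b, hb⟩, Subtype.ext hab⟩
  letI : Field F := hFF.toField
  letI : Module R S := Module.compHom S ι
  have hsm : ∀ (r : R) (s : S), r • s = ι r * s := fun _ _ => rfl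
  haveI : IsScalarTower R S S := ⟨fun r s t => mul_assoc _ _ _⟩
  have hpc : ∀ a ∈ F, ∀ i : ℕ, Commute (ι a) (x ^ i) := by
    intro a ha i
    apply Commute.pow_right
    have := hcomm a
    rw [(hFm a).1 ha, map_zero, add_zero] at this
    exact this.symm
  have hcent : ∀ (a : F) (s : S), ι a * s = s * ι a := by
    intro a s
    obtain ⟨c, hc, -⟩ := h.repr_uniq s
    rw [hc, Finsupp.sum, Finset.mul_sum, Finset.sum_mul]
    refine Finset.sum_congr rfl fun i _ => ?_
    rw [← mul_assoc, ← map_mul, mul_comm, map_mul, mul_assoc, (hpc a a.2 i).eq, mul_assoc]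
  letI : Algebra F S := RingHom.toAlgebra' (ι.comp F.subtype) hcent
  haveI : IsScalarTower F R S := ⟨fun k r s => by
    rw [hsm, hsm, Algebra.smul_def, Algebra.smul_def, map_mul, mul_assoc]; rfl⟩
  have hx : ∀ (r : R) (s : S), x * (r • s) = r • (x * s) + δ' r • s := by
    intro r s
    rw [hsm, hsm, hsm, ← mul_assoc, hcomm, add_mul, mul_assoc]; rfl
  let e : (ℕ →₀ R) →ₗ[R] S := Finsupp.linearCombination R (fun i => x ^ i)
  have he : ∀ c, e c = c.sum fun i r => ι r * x ^ i := fun c => rfl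
  have hbij : Function.Bijective e := by
    constructor
    · intro c c' hcc
      exact (h.repr_uniq (e c)).unique (he c) (hcc.trans (he c'))
    · intro s
      obtain ⟨c, hc, -⟩ := h.repr_uniq s
      exact ⟨c, hc.symm⟩
  let b : Module.Basis ℕ R S := ⟨(LinearEquiv.ofBijective e hbij).symm⟩
  have hb : ∀ i, b i = x ^ i := by
    intro i
    change e (Finsupp.single i 1) = _
    simp [e]
  have hrepr : ∀ s, b.repr s = oreCoeff h s := by
    intro s
    apply hbij.1
    have h2 : e (b.repr s) = s := (LinearEquiv.ofBijective e hbij).apply_symm_apply s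
    rw [h2]
    exact (h.repr_uniq s).exists.choose_spec
  obtain ⟨n, hn⟩ : ∃ n, oreDeg h P = n + 1 := ⟨oreDeg h P - 1, by omega⟩
  have hP : P ∈ Goo.L R x (n + 2) := by
    rw [Goo.mem_L_iff b hb]
    intro i hi
    rw [hrepr]
    by_contra h'
    have h3 : i ≤ oreDeg h P := Finset.le_sup (f := id) (Finsupp.mem_support_iff.2 h')
    omega
  have hu : IsUnit (b.repr P (n + 1)) := by
    rw [hrepr, ← hn]; exact hlc
  have hK : ∀ r, δ' r = 0 ↔ ∃ k : F, algebraMap F R k = r := by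
    intro r
    constructor
    · intro hr; exact ⟨⟨r, hr⟩, rfl⟩
    · rintro ⟨k, rfl⟩; exact k.2
  have key := Goo.not_indep (K := F) (R := R) (δ := δ') hsemiprime hmul hK hx b hb hPQ hP hu
  rw [linearIndependent_iff] at key
  push Not at key
  obtain ⟨l, hl, hl0⟩ := key
  refine ⟨l.mapRange F.subtype (map_zero _), ?_, ?_, ?_⟩
  · intro h0
    apply hl0
    ext p
    have := DFunLike.congr_fun h0 p
    simpa using this
  · intro p
    rw [Finsupp.mapRange_apply]
    exact (l p).2
  · rw [Finsupp.sum_mapRange_index (by simp)]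
    rw [← hl, Finsupp.linearCombination_apply]
    refine Finset.sum_congr rfl fun p _ => ?_
    beta_reduce
    rw [Algebra.smul_def, mul_assoc]; rfl
end
end

section
/- Let R be a commutative ring with a derivation δ such that the ring of constants is a field F of characteristic zero. Assume that for every a ∈ R, if the set {b ∈ R : δ(b) = ab} contains a nonzero element, then it contains an invertible element. Let P be an element of S = R[x; id_R, δ] of positive degree n with invertible leading coefficient. Then C_S(P) is a free F[P]-module of rank at most n; consequently, if Q ∈ S commutes with P, then there exists a nonzero polynomial f(s,t) ∈ F[s,t] such that f(P,Q) = 0. -/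
open Finsupp

noncomputable section

variable {R S : Type*}

namespace CG

/-- elements of degree less than `d` -/
def T [CommRing R] [Ring S] (ι : R →+* S) (x : S) (d : ℕ) : AddSubgroup S :=
  AddSubgroup.closure {s | ∃ r : R, ∃ i < d, s = ι r * x ^ i}

/-- `s` has degree at most `d` with coefficient `a` at `d` -/
def Lead [CommRing R] [Ring S] (ι : R →+* S) (x : S) (s : S) (d : ℕ) (a : R) : Prop :=
  s - ι a * x ^ d ∈ T ι x d

section
variable [CommRing R] [Ring S] {ι : R →+* S} {δ : R → R} {x : S}

lemma mono_mem (r : R) {i d : ℕ} (hi : i < d) : ι r * x ^ i ∈ T ι x d :=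
  AddSubgroup.subset_closure ⟨r, i, hi, rfl⟩

lemma T_mono {d e : ℕ} (hde : d ≤ e) : T ι x d ≤ T ι x e := by
  apply AddSubgroup.closure_mono
  rintro s ⟨r, i, hi, rfl⟩
  exact ⟨r, i, by omega, rfl⟩

lemma T_zero {s : S} (hs : s ∈ T ι x 0) : s = 0 := by
  have : T ι x 0 = ⊥ := by
    unfold T
    convert AddSubgroup.closure_empty
    ext s; simp
  rw [this] at hs
  simpa using hs

lemma T_map (f : S →+ S) {d : ℕ} {V : AddSubgroup S}
    (hf : ∀ (r : R) (i : ℕ), i < d → f (ι r * x ^ i) ∈ V) {s : S} (hs : s ∈ T ι x d) :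
    f s ∈ V := by
  have : T ι x d ≤ V.comap f := by
    unfold T
    rw [AddSubgroup.closure_le]
    rintro s ⟨r, i, hi, rfl⟩
    exact hf r i hi
  exact this hs

lemma T_lmul (r : R) {d : ℕ} {s : S} (hs : s ∈ T ι x d) : ι r * s ∈ T ι x d := by
  refine T_map (AddMonoidHom.mulLeft (ι r)) ?_ hs
  intro a i hi
  simp only [AddMonoidHom.coe_mulLeft]
  rw [← mul_assoc, ← map_mul]
  exact mono_mem _ hi

lemma T_rx (k : ℕ) {d : ℕ} {s : S} (hs : s ∈ T ι x d) : s * x ^ k ∈ T ι x (d + k) := by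
  refine T_map (AddMonoidHom.mulRight (x ^ k)) ?_ hs
  intro a i hi
  simp only [AddMonoidHom.coe_mulRight]
  rw [mul_assoc, ← pow_add]
  exact mono_mem _ (by omega)

lemma T_lx (h : IsOreExtension ι (RingHom.id R) δ x) {d : ℕ} {s : S} (hs : s ∈ T ι x d) :
    x * s ∈ T ι x (d + 1) := by
  refine T_map (AddMonoidHom.mulLeft x) ?_ hs
  intro a i hi
  simp only [AddMonoidHom.coe_mulLeft]
  rw [← mul_assoc, h.comm_rule, add_mul, mul_assoc, ← pow_succ']
  exact add_mem (mono_mem _ (by omega)) (mono_mem _ (by omega))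

lemma T_lxk (h : IsOreExtension ι (RingHom.id R) δ x) (k : ℕ) {d : ℕ} {s : S}
    (hs : s ∈ T ι x d) : x ^ k * s ∈ T ι x (d + k) := by
  induction k with
  | zero => simpa using hs
  | succ k ih => rw [pow_succ', mul_assoc]; exact T_lx h ih

lemma T_mul (h : IsOreExtension ι (RingHom.id R) δ x) {d e k : ℕ} (hk : d + e ≤ k + 1)
    {s t : S} (hs : s ∈ T ι x d) (ht : t ∈ T ι x e) : s * t ∈ T ι x k := by
  refine T_map (AddMonoidHom.mulRight t) ?_ hs
  intro a i hi
  simp only [AddMonoidHom.coe_mulRight]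
  rw [mul_assoc]
  exact T_lmul _ (T_mono (by omega) (T_lxk h i ht))

lemma comm_main (h : IsOreExtension ι (RingHom.id R) δ x) (k : ℕ) (r : R) :
    x ^ k * ι r - ι r * x ^ k - ι (k * δ r) * x ^ (k - 1) ∈ T ι x (k - 1) := by
  induction k with
  | zero => simp
  | succ k ih =>
    have h1 := T_lx h ih
    have e : x ^ (k + 1) * ι r - ι r * x ^ (k + 1) - ι ((k + 1 : ℕ) * δ r) * x ^ (k + 1 - 1)
      = x * (x ^ k * ι r - ι r * x ^ k - ι (k * δ r) * x ^ (k - 1)) +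
        (x * (ι (k * δ r) * x ^ (k - 1)) - ι (k * δ r) * x ^ k) := by
      have h2 : x * ι r = ι r * x + ι (δ r) := h.comm_rule r
      have h3 : x * (ι r * x ^ k) = ι r * x ^ (k + 1) + ι (δ r) * x ^ k := by
        rw [← mul_assoc, h2, add_mul, mul_assoc, ← pow_succ']
      rw [mul_sub, mul_sub, h3, ← mul_assoc x (x ^ k), ← pow_succ', Nat.add_sub_cancel]
      push_cast
      rw [add_mul, one_mul, map_add, add_mul]
      abel
    rw [e]
    rcases k with _ | k
    · simp
    · refine add_mem h1 ?_
      rw [Nat.add_sub_cancel, ← mul_assoc, h.comm_rule, add_mul, mul_assoc, ← pow_succ']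
      rw [RingHom.id_apply, Nat.add_sub_cancel, add_sub_cancel_left]
      exact mono_mem _ (by omega)

lemma comm_main' (h : IsOreExtension ι (RingHom.id R) δ x) (k : ℕ) (r : R) :
    x ^ k * ι r - ι r * x ^ k ∈ T ι x k := by
  rcases k with _ | k
  · simp
  · have := T_mono (Nat.sub_le _ 1) (comm_main h (k + 1) r)
    have h2 := add_mem this (mono_mem (ι := ι) (x := x) ((k + 1 : ℕ) * δ r)
      (by omega : k + 1 - 1 < k + 1))
    simpa using h2

lemma mono_comm (a b : R) (i j : ℕ) :
    (ι a * x ^ i) * (ι b * x ^ j) - (ι b * x ^ j) * (ι a * x ^ i)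
     = ι a * (x ^ i * ι b - ι b * x ^ i) * x ^ j - ι b * (x ^ j * ι a - ι a * x ^ j) * x ^ i := by
  have : ι a * ι b = ι b * ι a := by rw [← map_mul, mul_comm, map_mul]
  simp only [mul_sub, sub_mul, ← mul_assoc, this]
  simp only [mul_assoc, ← pow_add, add_comm j i]
  abel

lemma T_comm (h : IsOreExtension ι (RingHom.id R) δ x) {d e k : ℕ} (hk : d + e ≤ k + 2)
    {s t : S} (hs : s ∈ T ι x d) (ht : t ∈ T ι x e) : s * t - t * s ∈ T ι x k := by
  refine T_map (AddMonoidHom.mulRight t - AddMonoidHom.mulLeft t) ?_ hs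
  intro a i hi
  refine T_map (AddMonoidHom.mulLeft (ι a * x ^ i) - AddMonoidHom.mulRight (ι a * x ^ i)) ?_ ht
  intro b j hj
  simp only [AddMonoidHom.sub_apply, AddMonoidHom.coe_mulLeft, AddMonoidHom.coe_mulRight]
  rw [mono_comm]
  refine sub_mem (T_mono ?_ (T_rx j (T_lmul a (comm_main' h i b))))
    (T_mono ?_ (T_rx i (T_lmul b (comm_main' h j a)))) <;> omega

lemma exists_lead {d : ℕ} {s : S} (hs : s ∈ T ι x (d + 1)) : ∃ a, Lead ι x s d a := by
  unfold Lead
  induction hs using AddSubgroup.closure_induction with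
  | mem s hs =>
    obtain ⟨r, i, hi, rfl⟩ := hs
    rcases Nat.lt_succ_iff_lt_or_eq.mp hi with h1 | rfl
    · exact ⟨0, by simpa using mono_mem r h1⟩
    · exact ⟨r, by simp⟩
  | zero => exact ⟨0, by simp⟩
  | add s t _ _ h1 h2 =>
    obtain ⟨a, ha⟩ := h1
    obtain ⟨b, hb⟩ := h2
    refine ⟨a + b, ?_⟩
    have := add_mem ha hb
    rw [map_add, add_mul]
    convert this using 1
    abel
  | neg s _ h1 =>
    obtain ⟨a, ha⟩ := h1
    refine ⟨-a, ?_⟩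
    have := neg_mem ha
    rw [map_neg, neg_mul]
    convert this using 1
    abel

lemma exists_T (h : IsOreExtension ι (RingHom.id R) δ x) (s : S) : ∃ d, s ∈ T ι x d := by
  obtain ⟨c, hc, -⟩ := h.repr_uniq s
  refine ⟨c.support.sup id + 1, ?_⟩
  rw [hc]
  refine sum_mem fun i hi => mono_mem _ (Nat.lt_succ_of_le (Finset.le_sup (f := id) hi))

lemma exists_repr {d : ℕ} {s : S} (hs : s ∈ T ι x d) :
    ∃ c : ℕ →₀ R, (∀ i, d ≤ i → c i = 0) ∧ s = c.sum fun i r => ι r * x ^ i := by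
  induction hs using AddSubgroup.closure_induction with
  | mem s hs =>
    obtain ⟨r, i, hi, rfl⟩ := hs
    refine ⟨Finsupp.single i r, ?_, by simp⟩
    intro j hj
    rw [Finsupp.single_apply, if_neg (by omega)]
  | zero => exact ⟨0, by simp⟩
  | add s t _ _ h1 h2 =>
    obtain ⟨a, ha, rfl⟩ := h1
    obtain ⟨b, hb, rfl⟩ := h2
    refine ⟨a + b, fun i hi => by simp [ha i hi, hb i hi], ?_⟩
    rw [Finsupp.sum_add_index'] <;> simp [add_mul]
  | neg s _ h1 =>
    obtain ⟨a, ha, rfl⟩ := h1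
    refine ⟨-a, fun i hi => by simp [ha i hi], ?_⟩
    rw [Finsupp.sum_neg_index] <;> simp [Finsupp.sum]

lemma mono_T (h : IsOreExtension ι (RingHom.id R) δ x) {d : ℕ} {a : R}
    (ha : ι a * x ^ d ∈ T ι x d) : a = 0 := by
  obtain ⟨c, hc, e⟩ := exists_repr ha
  have := (h.repr_uniq (ι a * x ^ d)).unique (y₁ := c) (y₂ := Finsupp.single d a) e (by simp)
  have h2 := hc d le_rfl
  rw [this] at h2
  simpa using h2

lemma Lead.mem {s : S} {d : ℕ} {a : R} (hs : Lead ι x s d a) : s ∈ T ι x (d + 1) := by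
  have := add_mem (T_mono (Nat.le_succ d) hs) (mono_mem (ι := ι) (x := x) a (Nat.lt_succ_self d))
  simpa using this

lemma lead_of_mem {s : S} {d : ℕ} (hs : s ∈ T ι x d) : Lead ι x s d 0 := by
  simpa [Lead] using hs

lemma Lead.mem_of_zero {s : S} {d : ℕ} (hs : Lead ι x s d 0) : s ∈ T ι x d := by
  simpa [Lead] using hs

lemma Lead.uniq (h : IsOreExtension ι (RingHom.id R) δ x) {s : S} {d : ℕ} {a b : R}
    (ha : Lead ι x s d a) (hb : Lead ι x s d b) : a = b := by
  have := sub_mem hb ha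
  rw [← sub_eq_zero]
  apply mono_T h
  convert this using 1
  rw [map_sub, sub_mul]; abel

lemma Lead.sub {s t : S} {d : ℕ} {a b : R}
    (ha : Lead ι x s d a) (hb : Lead ι x t d b) : Lead ι x (s - t) d (a - b) := by
  have := sub_mem ha hb
  unfold Lead
  convert this using 1
  rw [map_sub, sub_mul]; abel

lemma Lead.add {s t : S} {d : ℕ} {a b : R}
    (ha : Lead ι x s d a) (hb : Lead ι x t d b) : Lead ι x (s + t) d (a + b) := by
  have := add_mem ha hb
  unfold Lead
  convert this using 1
  rw [map_add, add_mul]; abel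

lemma Lead.smul {s : S} {d : ℕ} {a : R} (r : R)
    (ha : Lead ι x s d a) : Lead ι x (ι r * s) d (r * a) := by
  have := T_lmul r ha
  unfold Lead
  convert this using 1
  rw [map_mul, mul_sub, mul_assoc]

lemma Lead.mul (h : IsOreExtension ι (RingHom.id R) δ x) {s t : S} {d e : ℕ} {a b : R}
    (ha : Lead ι x s d a) (hb : Lead ι x t e b) : Lead ι x (s * t) (d + e) (a * b) := by
  have h1 := T_mul h (k := d + e) (by omega) ha hb.mem
  have h2 := T_mul h (k := d + e) (by omega)
    (mono_mem (ι := ι) (x := x) a (Nat.lt_succ_self d)) hb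
  have h3 := T_lmul a (T_rx e (comm_main' h d b))
  rw [sub_mul] at h3
  have e1 : ι (a * b) * x ^ (d + e) = ι a * (ι b * x ^ d * x ^ e) := by
    rw [map_mul, pow_add]; simp only [mul_assoc]
  have e2 : ι a * (x ^ d * ι b * x ^ e) = ι a * x ^ d * (ι b * x ^ e) := by
    simp only [mul_assoc]
  unfold Lead
  convert add_mem (add_mem h1 h2) h3 using 1
  rw [e1, mul_sub (ι a), e2, sub_mul, mul_sub]
  abel

lemma lead_one : Lead ι x 1 0 1 := by simp [Lead]

lemma Lead.pow (h : IsOreExtension ι (RingHom.id R) δ x) {s : S} {d : ℕ} {a : R}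
    (ha : Lead ι x s d a) (k : ℕ) : Lead ι x (s ^ k) (d * k) (a ^ k) := by
  induction k with
  | zero => simpa using lead_one
  | succ k ih => rw [pow_succ, pow_succ, Nat.mul_succ]; exact ih.mul h ha

lemma lead_P (h : IsOreExtension ι (RingHom.id R) δ x) (P : S) :
    Lead ι x P (oreDeg h P) (oreLeadCoeff h P) := by
  classical
  have hc : P = (oreCoeff h P).sum fun i r => ι r * x ^ i := (h.repr_uniq P).exists.choose_spec
  unfold Lead oreLeadCoeff
  set c := oreCoeff h P
  set d := oreDeg h P with hd
  have : (c.sum fun i r => ι r * x ^ i) = ι (c d) * x ^ d + (c.erase d).sum fun i r => ι r * x ^ i := by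
    by_cases hh : d ∈ c.support
    · exact (Finsupp.add_sum_erase c d (fun i r => ι r * x ^ i) hh).symm
    · have : c d = 0 := by simpa using hh
      rw [Finsupp.erase_of_notMem_support hh, this]; simp
  rw [hc, this, add_sub_cancel_left]
  refine sum_mem fun i hi => mono_mem _ ?_
  rw [Finsupp.support_erase, Finset.mem_erase] at hi
  have : i ≤ d := Finset.le_sup (f := id) hi.2
  omega

/-- The subleading identity. -/
lemma lead_deriv (h : IsOreExtension ι (RingHom.id R) δ x) {P Q : S} {n m : ℕ} {p q : R}
    (hn : 0 < n) (hP : Lead ι x P n p) (hQ : Lead ι x Q m q) (hPQ : P * Q = Q * P) :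
    n * p * δ q = m * q * δ p := by
  have h1 := T_comm h (k := n + m - 1) (by omega) hP hQ.mem
  have h2 := T_comm h (k := n + m - 1) (by omega)
    (mono_mem (ι := ι) (x := x) p (Nat.lt_succ_self n)) hQ
  have h3 : (ι p * x ^ n) * (ι q * x ^ m) - (ι q * x ^ m) * (ι p * x ^ n) ∈ T ι x (n + m - 1) := by
    have e : (ι p * x ^ n) * (ι q * x ^ m) - (ι q * x ^ m) * (ι p * x ^ n) =
       (P * Q - Q * P) - ((P - ι p * x ^ n) * Q - Q * (P - ι p * x ^ n)) -
        (ι p * x ^ n * (Q - ι q * x ^ m) - (Q - ι q * x ^ m) * (ι p * x ^ n)) := by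
      simp only [mul_sub, sub_mul]; abel
    rw [e, hPQ, sub_self]
    exact sub_mem (sub_mem (zero_mem _) h1) h2
  rw [mono_comm] at h3
  have h4 := T_mono (e := n + m - 1) (by omega) (T_rx m (T_lmul p (comm_main h n q)))
  have h5 : ι q * (x ^ m * ι p - ι p * x ^ m - ι (m * δ p) * x ^ (m - 1)) * x ^ n
     ∈ T ι x (n + m - 1) := by
    rcases m with _ | m
    · simp
    · exact T_mono (by omega) (T_rx n (T_lmul q (comm_main h (m + 1) p)))
  have h6 : ι (n * p * δ q - m * q * δ p) * x ^ (n + m - 1) ∈ T ι x (n + m - 1) := by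
    have e1 : ι p * (ι (n * δ q) * x ^ (n - 1)) * x ^ m = ι (n * p * δ q) * x ^ (n + m - 1) := by
      rw [show n + m - 1 = n - 1 + m by omega, pow_add, ← mul_assoc (ι p), ← map_mul, mul_assoc]
      congr 2; ring
    have e2 : ι q * (ι (m * δ p) * x ^ (m - 1)) * x ^ n = ι (m * q * δ p) * x ^ (n + m - 1) := by
      rcases m with _ | m
      · simp
      · rw [show n + (m + 1) - 1 = m + 1 - 1 + n by omega, pow_add, ← mul_assoc (ι q), ← map_mul,
          mul_assoc]
        congr 2; ring
    rw [map_sub, sub_mul, ← e1, ← e2]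
    convert sub_mem (sub_mem h3 h4) (neg_mem h5) using 1
    simp only [mul_sub, sub_mul]
    abel
  exact sub_eq_zero.mp (mono_T h h6)

lemma d_zero (h : IsOreExtension ι (RingHom.id R) δ x) : δ 0 = 0 := by
  have := h.deriv_add 0 0
  simpa using this

lemma d_one (h : IsOreExtension ι (RingHom.id R) δ x) : δ 1 = 0 := by
  have := h.deriv_mul 1 1
  simpa using this

lemma d_neg (h : IsOreExtension ι (RingHom.id R) δ x) (a : R) : δ (-a) = - δ a := by
  have := h.deriv_add (-a) a
  rw [neg_add_cancel, d_zero h] at this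
  exact eq_neg_of_add_eq_zero_left this.symm

lemma d_nat (h : IsOreExtension ι (RingHom.id R) δ x) (k : ℕ) : δ (k : R) = 0 := by
  induction k with
  | zero => simpa using d_zero h
  | succ k ih => rw [Nat.cast_succ, h.deriv_add, ih, d_one h, add_zero]

lemma d_mul (h : IsOreExtension ι (RingHom.id R) δ x) {a b : R} (ha : δ a = 0) (hb : δ b = 0) :
    δ (a * b) = 0 := by
  rw [h.deriv_mul, ha, hb]; simp

/-- the subring of constants -/
def K (h : IsOreExtension ι (RingHom.id R) δ x) : Subring R where
  carrier := {a | δ a = 0}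
  zero_mem' := d_zero h
  one_mem' := d_one h
  add_mem' := by
    intro a b (ha : δ a = 0) (hb : δ b = 0)
    change δ (a + b) = 0
    rw [h.deriv_add, ha, hb, add_zero]
  mul_mem' := by
    intro a b ha hb
    exact d_mul h ha hb
  neg_mem' := by
    intro a (ha : δ a = 0)
    change δ (-a) = 0
    rw [d_neg h, ha, neg_zero]

lemma const_comm (h : IsOreExtension ι (RingHom.id R) δ x) {k : R} (hk : δ k = 0) (s : S) :
    Commute (ι k) s := by
  obtain ⟨d, hd⟩ := exists_T h s
  have hx : Commute (ι k) x := by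
    have := h.comm_rule k
    rw [hk] at this
    change ι k * x = x * ι k
    simpa using this.symm
  have := T_map (V := ⊥) (AddMonoidHom.mulLeft (ι k) - AddMonoidHom.mulRight (ι k)) ?_ hd
  · have : ι k * s - s * ι k = 0 := by simpa using this
    exact sub_eq_zero.mp this
  · intro r i _
    have h1 : Commute (ι k) (ι r) := by
      change _ * _ = _ * _
      rw [← map_mul, mul_comm, map_mul]
    have : Commute (ι k) (ι r * x ^ i) := h1.mul_right (hx.pow_right i)
    simpa using sub_eq_zero.mpr this.eq

lemma polys_add {F : AddSubgroup R} {P a b : S} (ha : a ∈ polysIn ι (F : Set R) P)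
    (hb : b ∈ polysIn ι (F : Set R) P) : a + b ∈ polysIn ι (F : Set R) P := by
  obtain ⟨c, hc, rfl⟩ := ha
  obtain ⟨d, hd, rfl⟩ := hb
  refine ⟨c + d, fun j => F.add_mem (hc j) (hd j), ?_⟩
  rw [Finsupp.sum_add_index'] <;> simp [add_mul]

lemma polys_neg {F : AddSubgroup R} {P a : S} (ha : a ∈ polysIn ι (F : Set R) P) :
    -a ∈ polysIn ι (F : Set R) P := by
  obtain ⟨c, hc, rfl⟩ := ha
  refine ⟨-c, fun j => F.neg_mem (hc j), ?_⟩
  rw [Finsupp.sum_neg_index] <;> simp [Finsupp.sum]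

lemma polys_mono {F : AddSubgroup R} {P : S} {k : R} (hk : k ∈ F) (j : ℕ) :
    ι k * P ^ j ∈ polysIn ι (F : Set R) P := by
  refine ⟨Finsupp.single j k, ?_, by simp⟩
  intro i
  rw [Finsupp.single_apply]
  split_ifs
  · exact hk
  · exact F.zero_mem

lemma polys_lead (h : IsOreExtension ι (RingHom.id R) δ x)
    (hF : IsFieldSubset {a : R | δ a = 0}) {P : S} {n : ℕ} {p : R} (hn : 0 < n)
    (hP : Lead ι x P n p) (hp : IsUnit p) {c : S} (hc : c ∈ polysIn ι {a : R | δ a = 0} P)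
    (hc0 : c ≠ 0) : ∃ k b, IsUnit b ∧ Lead ι x c (n * k) b := by
  classical
  obtain ⟨d, hd, rfl⟩ := hc
  have hne : d.support.Nonempty := by
    rw [Finset.nonempty_iff_ne_empty]
    intro e
    rw [Finsupp.support_eq_empty] at e
    simp [e] at hc0
  set k := d.support.max' hne with hk
  have hks : k ∈ d.support := Finset.max'_mem _ _
  have hle : ∀ i ∈ d.support, i ≤ k := fun i hi => Finset.le_max' _ _ hi
  obtain ⟨b, -, hb⟩ := hF.2 (d k) (hd k) (by simpa using hks)
  refine ⟨k, d k * p ^ k, (IsUnit.of_mul_eq_one b hb).mul (hp.pow k), ?_⟩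
  rw [← Finsupp.add_sum_erase d k (fun i r => ι r * P ^ i) hks]
  rw [← add_zero (d k * p ^ k)]
  refine ((hP.pow h k).smul (d k)).add (lead_of_mem ?_)
  refine sum_mem fun i hi => ?_
  rw [Finsupp.support_erase, Finset.mem_erase] at hi
  have h1 : i < k := lt_of_le_of_ne (hle i hi.2) hi.1
  refine T_mono ?_ ((hP.pow h i).smul _).mem
  have : n * (i + 1) ≤ n * k := Nat.mul_le_mul_left n h1
  rw [Nat.mul_succ] at this
  omega

/-- the abstract properties of the centralizer -/
structure Good (ι : R →+* S) (δ : R → R) (x P : S) : Prop where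
  unit : ∀ (Q : S) (m : ℕ) (q : R), Commute Q P → Lead ι x Q m q → q ≠ 0 → IsUnit q
  ratio : ∀ (Q Q' : S) (m : ℕ) (q q' : R), Commute Q P → Commute Q' P → Lead ι x Q m q →
    Lead ι x Q' m q' → q' ≠ 0 → ∃ k, δ k = 0 ∧ q = k * q'

lemma good (h : IsOreExtension ι (RingHom.id R) δ x)
    (hF : IsFieldSubset {a : R | δ a = 0})
    (hFchar : ∀ m : ℕ, m ≠ 0 → (m : R) ≠ 0)
    (heigen : ∀ a : R, (∃ b : R, b ≠ 0 ∧ δ b = a * b) → ∃ b : R, IsUnit b ∧ δ b = a * b)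
    {P : S} {n : ℕ} {p : R} (hn : 0 < n) (hP : Lead ι x P n p) (hp : IsUnit p) :
    Good ι δ x P := by
  obtain ⟨pi, hpi⟩ := hp.exists_right_inv
  obtain ⟨ni, -, hni⟩ := hF.2 n (d_nat h n) (hFchar n hn.ne')
  have hD : ∀ (Q : S) (m : ℕ) (q : R), Commute Q P → Lead ι x Q m q →
      δ q = (m * ni * pi * δ p) * q := by
    intro Q m q hQ hq
    have := lead_deriv h hn hP hq hQ.eq.symm
    calc δ q = (n * ni) * (p * pi) * δ q := by rw [hpi, hni]; ring
      _ = ni * pi * (n * p * δ q) := by ring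
      _ = _ := by rw [this]; ring
  have hV : ∀ (a b q : R), IsUnit b → δ b = a * b → δ q = a * q →
      ∃ k, δ k = 0 ∧ q = k * b := by
    intro a b q hb hdb hq
    obtain ⟨bi, hbi⟩ := hb.exists_right_inv
    refine ⟨q * bi, ?_, ?_⟩
    · have h1 : q = q * bi * b := by rw [mul_assoc, mul_comm bi, hbi, mul_one]
      have h2 := h.deriv_mul (q * bi) b
      rw [← h1, hq, hdb, RingHom.id_apply] at h2
      have h3 : δ (q * bi) * b = 0 := by
        linear_combination -h2 - a * q * hbi
      calc δ (q * bi) = (δ (q * bi) * b) * bi := by rw [mul_assoc, hbi, mul_one]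
        _ = 0 := by rw [h3, zero_mul]
    · rw [mul_assoc, mul_comm bi, hbi, mul_one]
  constructor
  · intro Q m q hQ hq hq0
    obtain ⟨b, hb, hb'⟩ := heigen _ ⟨q, hq0, hD Q m q hQ hq⟩
    obtain ⟨k, hk, rfl⟩ := hV _ b q hb hb' (hD Q m q hQ hq)
    obtain ⟨l, -, hl⟩ := hF.2 k hk (by rintro rfl; simp at hq0)
    exact (IsUnit.of_mul_eq_one l hl).mul hb
  · intro Q Q' m q q' hQ hQ' hq hq' hq0
    obtain ⟨b, hb, hb'⟩ := heigen _ ⟨q', hq0, hD Q' m q' hQ' hq'⟩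
    obtain ⟨k, hk, rfl⟩ := hV _ b q hb hb' (hD Q m q hQ hq)
    obtain ⟨k', hk', rfl⟩ := hV _ b q' hb hb' (hD Q' m q' hQ' hq')
    obtain ⟨l, hl', hl⟩ := hF.2 k' hk' (by rintro rfl; simp at hq0)
    exact ⟨k * l, d_mul h hk hl', by linear_combination (-k * b) * hl⟩

lemma part2 (h : IsOreExtension ι (RingHom.id R) δ x)
    (hF : IsFieldSubset {a : R | δ a = 0})
    {P : S} {n : ℕ} {p : R} (hP : Lead ι x P n p) (hG : Good ι δ x P)
    (Q : S) (hQ : P * Q = Q * P) :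
    ∃ c : ℕ × ℕ →₀ R, c ≠ 0 ∧ (∀ p, c p ∈ {a : R | δ a = 0}) ∧
          (c.sum fun p b => ι b * P ^ p.1 * Q ^ p.2) = 0 := by
  classical
  letI : Module (K h) S := Module.compHom S (ι.comp (K h).subtype)
  have hsm : ∀ (k : K h) (s : S), k • s = ι k * s := fun k s => rfl
  haveI : Nontrivial (K h) := ⟨⟨0, 1, fun e => hF.1 (congrArg Subtype.val e)⟩⟩
  have hspan : ∀ D : ℕ, ∃ A : Finset S, A.card ≤ D ∧ ∀ s, Commute s P → s ∈ T ι x D →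
      s ∈ Submodule.span (K h) (A : Set S) := by
    intro D
    induction D with
    | zero =>
      refine ⟨∅, by simp, fun s _ hs => ?_⟩
      rw [T_zero hs]; exact zero_mem _
    | succ D ih =>
      obtain ⟨A, hA, hA'⟩ := ih
      by_cases hw : ∃ w q, Commute w P ∧ Lead ι x w D q ∧ q ≠ 0
      · obtain ⟨w, q, hw, hq, hq0⟩ := hw
        refine ⟨insert w A, (Finset.card_insert_le _ _).trans (by omega), fun s hs hsT => ?_⟩
        obtain ⟨a, ha⟩ := exists_lead hsT
        obtain ⟨k, hk, rfl⟩ := hG.ratio s w D a q hs hw ha hq hq0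
        have h1 : s - ι k * w ∈ T ι x D := by
          have := ha.sub (hq.smul k)
          rw [sub_self] at this
          exact this.mem_of_zero
        have h2 := hA' _ (hs.sub_left ((const_comm h hk P).mul_left hw)) h1
        have h3 : w ∈ Submodule.span (K h) ((insert w A : Finset S) : Set S) :=
          Submodule.subset_span (by simp)
        have h4 := Submodule.smul_mem _ (⟨k, hk⟩ : K h) h3
        rw [hsm] at h4
        have h5 := add_mem (Submodule.span_mono (by simp) h2) h4
        simpa using h5
      · refine ⟨A, by omega, fun s hs hsT => hA' s hs ?_⟩
        obtain ⟨a, ha⟩ := exists_lead hsT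
        have : a = 0 := by
          by_contra h0
          exact hw ⟨s, a, hs, ha, h0⟩
        rw [this] at ha
        exact ha.mem_of_zero
  obtain ⟨e, he⟩ := exists_T h Q
  obtain ⟨q, hq⟩ := exists_lead (T_mono (Nat.le_succ e) he)
  set M := e * n + 2 with hM
  set D := n * (M - 1) + e * n + 1 with hD
  obtain ⟨A, hA, hA'⟩ := hspan D
  let v : Fin M × Fin (n + 1) → S := fun ij => P ^ (ij.1 : ℕ) * Q ^ (ij.2 : ℕ)
  have hcQ : Commute Q P := hQ.symm
  have hv : ∀ ij, v ij ∈ Submodule.span (K h) (A : Set S) := by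
    rintro ⟨⟨i, hi⟩, ⟨j, hj⟩⟩
    refine hA' _ (((Commute.refl P).pow_left i).mul_left (hcQ.pow_left j)) ?_
    refine T_mono ?_ ((hP.pow h i).mul h (hq.pow h j)).mem
    have h1 : n * i ≤ n * (M - 1) := Nat.mul_le_mul_left _ (by omega)
    have h2 : e * j ≤ e * n := Nat.mul_le_mul_left _ (by omega)
    omega
  have hli : ¬ LinearIndependent (K h) v := by
    intro hli
    have h1 := linearIndependent_le_span_aux' v hli (A : Set S)
      (by rintro _ ⟨ij, rfl⟩; exact hv ij)
    have h2 : M * (n + 1) ≤ A.card := by simpa using h1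
    have h3 : M * (n + 1) ≤ n * (M - 1) + e * n + 1 := h2.trans hA
    rw [hM] at h3
    rw [show e * n + 2 - 1 = e * n + 1 by omega] at h3
    nlinarith
  rw [Fintype.not_linearIndependent_iff] at hli
  obtain ⟨g, hg, ij, hij⟩ := hli
  let f : Fin M × Fin (n + 1) ↪ ℕ × ℕ :=
    ⟨fun ij => (ij.1, ij.2), by
      rintro ⟨a, b⟩ ⟨c, d⟩ hh
      simp only [Prod.mk.injEq] at hh
      exact Prod.ext (Fin.ext hh.1) (Fin.ext hh.2)⟩
  let g' : (Fin M × Fin (n + 1)) →₀ R := Finsupp.equivFunOnFinite.symm fun ij => (g ij : R)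
  refine ⟨g'.embDomain f, ?_, ?_, ?_⟩
  · intro h0
    rw [Finsupp.embDomain_eq_zero] at h0
    have := DFunLike.congr_fun h0 ij
    apply hij
    ext
    simpa [g'] using this
  · intro p
    by_cases hp : p ∈ Set.range f
    · obtain ⟨ab, rfl⟩ := hp
      rw [Finsupp.embDomain_apply_self]
      exact (g ab).2
    · rw [Finsupp.embDomain_notin_range _ _ _ hp]
      exact d_zero h
  · rw [Finsupp.sum_embDomain, Finsupp.sum_fintype _ _ (by simp)]
    rw [← hg]
    refine Finset.sum_congr rfl fun ab _ => ?_
    rw [hsm, mul_assoc]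
    rfl

lemma part1 (h : IsOreExtension ι (RingHom.id R) δ x)
    (hF : IsFieldSubset {a : R | δ a = 0})
    {P : S} {n : ℕ} {p : R} (hn : 0 < n) (hP : Lead ι x P n p) (hp : IsUnit p)
    (hG : Good ι δ x P) :
    IsFreeModuleOfRankAtMost (polysIn ι {a : R | δ a = 0} P) (centralizerOf P) n := by
  classical
  haveI : Nontrivial R := ⟨⟨0, 1, hF.1⟩⟩
  have padd : ∀ {a b : S}, a ∈ polysIn ι {a : R | δ a = 0} P →
      b ∈ polysIn ι {a : R | δ a = 0} P → a + b ∈ polysIn ι {a : R | δ a = 0} P :=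
    fun ha hb => polys_add (F := (K h).toAddSubgroup) ha hb
  have pneg : ∀ {a : S}, a ∈ polysIn ι {a : R | δ a = 0} P →
      -a ∈ polysIn ι {a : R | δ a = 0} P :=
    fun ha => polys_neg (F := (K h).toAddSubgroup) ha
  have pmono : ∀ {k : R} (_ : δ k = 0) (j : ℕ), ι k * P ^ j ∈ polysIn ι {a : R | δ a = 0} P :=
    fun hk j => polys_mono (F := (K h).toAddSubgroup) hk j
  have pzero : (0 : S) ∈ polysIn ι {a : R | δ a = 0} P := by
    simpa using pmono (d_zero h) 0
  let E : ℕ → Prop := fun d => ∃ w q, Commute w P ∧ Lead ι x w d q ∧ q ≠ 0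
  let J : Finset (Fin n) := Finset.univ.filter fun r => ∃ d, E d ∧ d % n = r
  have hJ : ∀ r : J, ∃ d, E d ∧ d % n = (r : Fin n) := fun r => (Finset.mem_filter.mp r.2).2
  let m := J.card
  have hm : m ≤ n := by simpa using Finset.card_le_univ J
  let φ : Fin m ≃ J := J.equivFin.symm
  let dg : Fin m → ℕ := fun i => Nat.find (hJ (φ i))
  have hdg : ∀ i, E (dg i) ∧ dg i % n = (φ i : Fin n) := fun i => Nat.find_spec (hJ (φ i))
  have hmin : ∀ i d, E d → d % n = (φ i : Fin n) → dg i ≤ d :=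
    fun i d h1 h2 => Nat.find_min' (hJ (φ i)) ⟨h1, h2⟩
  have hinj : ∀ i j, dg i % n = dg j % n → i = j := by
    intro i j hij
    rw [(hdg i).2, (hdg j).2] at hij
    exact φ.injective (Subtype.ext (Fin.ext hij))
  choose u lu hu hul hul0 using fun i => (hdg i).1
  have hulu : ∀ i, IsUnit (lu i) := fun i => hG.unit _ _ _ (hu i) (hul i) (hul0 i)
  refine ⟨m, hm, u, fun i => hu i, fun e he => ?_⟩
  have hex : ∀ D : ℕ, ∀ s, Commute s P → s ∈ T ι x D → ∃ c : Fin m → S,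
      (∀ i, c i ∈ polysIn ι {a : R | δ a = 0} P) ∧ s = ∑ i, c i * u i := by
    intro D
    induction D with
    | zero =>
      intro s _ hs
      exact ⟨fun _ => 0, fun _ => pzero, by simp [T_zero hs]⟩
    | succ D ih =>
      intro s hs hsT
      obtain ⟨a, ha⟩ := exists_lead hsT
      by_cases ha0 : a = 0
      · rw [ha0] at ha
        exact ih s hs ha.mem_of_zero
      have hED : E D := ⟨s, a, hs, ha, ha0⟩
      let r : J := ⟨⟨D % n, Nat.mod_lt _ hn⟩, by
        simp only [J, Finset.mem_filter, Finset.mem_univ, true_and]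
        exact ⟨D, hED, rfl⟩⟩
      let i := φ.symm r
      have hi : φ i = r := φ.apply_symm_apply r
      have h1 : dg i ≤ D := hmin i D hED (by rw [hi])
      have h2 : dg i % n = D % n := by rw [(hdg i).2, hi]
      obtain ⟨k, hk⟩ : n ∣ D - dg i := (Nat.modEq_iff_dvd' h1).mp h2
      have h3 : Lead ι x (P ^ k * u i) D (p ^ k * lu i) := by
        have := (hP.pow h k).mul h (hul i)
        rwa [show n * k + dg i = D by omega] at this
      have hc : Commute (P ^ k * u i) P := ((Commute.refl P).pow_left k).mul_left (hu i)
      obtain ⟨l, hl, hl'⟩ := hG.ratio s _ D a _ hs hc ha h3 ((hp.pow k).mul (hulu i)).ne_zero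
      have h4 : s - ι l * (P ^ k * u i) ∈ T ι x D := by
        have := ha.sub (h3.smul l)
        rw [← hl', sub_self] at this
        exact this.mem_of_zero
      obtain ⟨c, hc1, hc2⟩ := ih _ (hs.sub_left ((const_comm h hl P).mul_left hc)) h4
      refine ⟨c + Pi.single i (ι l * P ^ k), fun j => ?_, ?_⟩
      · refine padd (hc1 j) ?_
        rw [Pi.single_apply]
        split_ifs
        · exact pmono hl k
        · exact pzero
      · simp only [Pi.add_apply, add_mul, Finset.sum_add_distrib, Pi.single_apply, ite_mul,
          zero_mul, Finset.sum_ite_eq', Finset.mem_univ, if_true]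
        rw [← hc2, mul_assoc]
        abel
  have huniq : ∀ c : Fin m → S, (∀ i, c i ∈ polysIn ι {a : R | δ a = 0} P) →
      ∑ i, c i * u i = 0 → c = 0 := by
    intro c hc hsum
    by_contra hne
    have hd : ∀ i, ∃ k b, c i ≠ 0 → IsUnit b ∧ Lead ι x (c i) (n * k) b := by
      intro i
      by_cases h0 : c i = 0
      · exact ⟨0, 0, fun h1 => absurd h0 h1⟩
      · obtain ⟨k, b, hb⟩ := polys_lead h hF hn hP hp (hc i) h0
        exact ⟨k, b, fun _ => hb⟩
    choose k b hkb using hd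
    let N : Finset (Fin m) := Finset.univ.filter fun i => c i ≠ 0
    have hN : N.Nonempty := by
      obtain ⟨i, hi⟩ := Function.ne_iff.mp hne
      exact ⟨i, by simpa [N] using hi⟩
    obtain ⟨i, hi, himax⟩ := Finset.exists_max_image N (fun i => n * k i + dg i) hN
    have hi0 : c i ≠ 0 := by simpa [N] using hi
    have h1 : Lead ι x (c i * u i) (n * k i + dg i) (b i * lu i) :=
      (hkb i hi0).2.mul h (hul i)
    have h2 : ∑ j ∈ Finset.univ.erase i, c j * u j ∈ T ι x (n * k i + dg i) := by
      refine sum_mem fun j hj => ?_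
      by_cases hj0 : c j = 0
      · rw [hj0, zero_mul]; exact zero_mem _
      have h3 := himax j (by simpa [N] using hj0)
      refine T_mono ?_ ((hkb j hj0).2.mul h (hul j)).mem
      have : n * k j + dg j ≠ n * k i + dg i := by
        intro e
        have := congrArg (· % n) e
        simp only [Nat.mul_add_mod] at this
        exact (Finset.mem_erase.mp hj).1 (hinj j i this)
      omega
    have h4 := h1.add (lead_of_mem h2)
    rw [Finset.add_sum_erase _ (fun j => c j * u j) (Finset.mem_univ i), hsum, add_zero] at h4
    have h5 := h4.uniq h (lead_of_mem (zero_mem _))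
    exact ((hkb i hi0).1.mul (hulu i)).ne_zero h5
  obtain ⟨D, hD⟩ := exists_T h e
  obtain ⟨c, hc, hce⟩ := hex D e he hD
  refine ⟨c, ⟨hc, hce⟩, ?_⟩
  rintro c' ⟨hc', hce'⟩
  have := huniq (c' - c) (fun i => by
    rw [Pi.sub_apply, sub_eq_add_neg]; exact padd (hc' i) (pneg (hc i))) (by
    simp only [Pi.sub_apply, sub_mul, Finset.sum_sub_distrib]
    rw [← hce, ← hce', sub_self])
  exact sub_eq_zero.mp this

end
end CG

/-- **Carlson–Goodearl.** Let `R` be a commutative ring with a derivation `δ`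
whose ring of constants is a field `F` of characteristic zero. Assume that for each
`a ∈ R`, if `{b : δ b = a * b}` contains a nonzero element, then it contains an
invertible element. If `P ∈ S = R[x; id, δ]` has positive degree `n` with invertible
leading coefficient, then `C_S(P)` is a free `F[P]`-module of rank at most `n`;
consequently any `Q` commuting with `P` is annihilated together with `P` by a nonzero
polynomial with coefficients in `F`. -/
theorem carlson_goodearl [CommRing R] [Ring S]
    (ι : R →+* S) (δ : R → R) (x : S) (h : IsOreExtension ι (RingHom.id R) δ x)
    (hF : IsFieldSubset {a : R | δ a = 0})
    (hFchar : ∀ m : ℕ, m ≠ 0 → (m : R) ≠ 0)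
    (heigen : ∀ a : R, (∃ b : R, b ≠ 0 ∧ δ b = a * b) → ∃ b : R, IsUnit b ∧ δ b = a * b)
    (P : S) (n : ℕ) (hn : 0 < n) (hdeg : oreDeg h P = n)
    (hlc : IsUnit (oreLeadCoeff h P)) :
    IsFreeModuleOfRankAtMost (polysIn ι {a : R | δ a = 0} P) (centralizerOf P) n ∧
      ∀ Q : S, P * Q = Q * P →
        ∃ c : ℕ × ℕ →₀ R, c ≠ 0 ∧ (∀ p, c p ∈ {a : R | δ a = 0}) ∧
          (c.sum fun p b => ι b * P ^ p.1 * Q ^ p.2) = 0 := by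
  have hP := CG.lead_P h P
  rw [hdeg] at hP
  have hG := CG.good h hF hFchar heigen hn hP hlc
  exact ⟨CG.part1 h hF hn hP hlc hG, CG.part2 h hF hP hG⟩
end
end
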